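/- arXiv:2106.14044 — 2 statements merged into one kernel-verified Lean document; each statement's English description precedes it below -/
import Mathlib

section
/- Let M = p_i^{n_i} p_j^{n_j} p_k^{n_k} with p_i, p_j, p_k distinct primes. Assume A ⊕ B = ℤ_M and Φ_M | A. Let Λ be a D(M)-grid such that A ∩ Λ is nonempty and can be written as a union of pairwise disjoint M-fibers (possibly in different directions), but A ∩ Λ is not M-fibered in any single direction. Then A ∩ Λ contains a p_ν extended corner for some ν ∈ {i,j,k}. -/
open Polynomial

/-- The mask polynomial `A(X) = Σ_{a ∈ A} X^a` of a finite subset of `ZMod M`,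
using the representatives in `{0, …, M-1}`. -/
noncomputable def maskPoly (M : ℕ) (A : Finset (ZMod M)) : Polynomial ℤ :=
  ∑ a ∈ A, X ^ a.val

/-- `Φ_s | A` : the `s`-th cyclotomic polynomial divides the mask polynomial of `A` in `ℤ[X]`. -/
def cycDvd (M s : ℕ) (A : Finset (ZMod M)) : Prop :=
  cyclotomic s ℤ ∣ maskPoly M A

/-- `A ⊕ B = ℤ_M` : every element of `ℤ_M` has a unique representation `a + b`
with `a ∈ A` and `b ∈ B`. -/
def IsTiling (M : ℕ) (A B : Set (ZMod M)) : Prop :=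
  ∀ z : ZMod M, ∃! ab : ZMod M × ZMod M, ab.1 ∈ A ∧ ab.2 ∈ B ∧ ab.1 + ab.2 = z

/-- The Coven–Meyerowitz property (T2): whenever `s_1, …, s_m` are prime powers dividing `M`,
powers of pairwise distinct primes, with `Φ_{s_t} | A` for each `t`, then `Φ_{s_1 ⋯ s_m} | A`. -/
def SatisfiesT2 (M : ℕ) (A : Finset (ZMod M)) : Prop :=
  ∀ (P : Finset ℕ) (e : ℕ → ℕ), P.Nonempty →
    (∀ p ∈ P, p.Prime ∧ 1 ≤ e p ∧ p ^ e p ∣ M ∧ cycDvd M (p ^ e p) A) →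
    cycDvd M (∏ p ∈ P, p ^ e p) A

/-- The `D`-grid through `x` in `ZMod M` : `Λ(x, D) = {y : D ∣ y - x}`. -/
def gridSet (M : ℕ) (x : ZMod M) (D : ℕ) : Set (ZMod M) :=
  {y : ZMod M | (D : ZMod M) ∣ (y - x)}

/-- `S` is fibered in the `p` direction on scale `M`: every element of `S` has its whole
fiber `Λ(s, M/p)` contained in `S`. -/
def Fibered (M p : ℕ) (S : Set (ZMod M)) : Prop :=
  ∀ s ∈ S, gridSet M s (M / p) ⊆ S

/-- `Div_N(S)` : the set of values `(s - s', N) = gcd(s - s', N)` for `s, s' ∈ S`. -/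
def DivSet (M N : ℕ) (S : Set (ZMod M)) : Set ℕ :=
  {m : ℕ | ∃ s ∈ S, ∃ s' ∈ S, Nat.gcd (s - s').val N = m}

/-- `A ∩ Λ` contains a `p` extended corner (with the other two directions `q`, `r`):
there are `a, a' ∈ A ∩ Λ` with `(a - a', M) = M/p` such that `A ∩ Λ(a, M/(qr))` is
`M`-fibered in the `q` direction but not in the `r` direction, while `A ∩ Λ(a', M/(qr))` is
`M`-fibered in the `r` direction but not in the `q` direction. -/
def ExtCorner (M p q r : ℕ) (A Lam : Set (ZMod M)) : Prop :=
  ∃ a ∈ A ∩ Lam, ∃ a' ∈ A ∩ Lam,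
    Nat.gcd (a - a').val M = M / p ∧
    Fibered M q (A ∩ gridSet M a (M / (q * r))) ∧
    ¬ Fibered M r (A ∩ gridSet M a (M / (q * r))) ∧
    Fibered M r (A ∩ gridSet M a' (M / (q * r))) ∧
    ¬ Fibered M q (A ∩ gridSet M a' (M / (q * r)))

lemma tij_prime {M : ℕ} [NeZero M] {ι κ : Type} [Fintype ι] [Fintype κ] (f : ι → ZMod M) (g : κ → ZMod M)
    (h : Function.Bijective (fun x : ι × κ => f x.1 + g x.2)) (p : ℕ) (hp : p.Prime) (hc : p.Coprime M) :
    Function.Bijective (fun x : ι × κ => (p : ZMod M) * f x.1 + g x.2) := by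
  classical
  have : Fact p.Prime := ⟨hp⟩
  have hcard : Fintype.card ι * Fintype.card κ = M := by
    have := Fintype.card_of_bijective h
    rwa [Fintype.card_prod, ZMod.card] at this
  have hι : ((Fintype.card ι : ℕ) : ZMod p) ≠ 0 := by
    intro h0
    rw [ZMod.natCast_eq_zero_iff] at h0
    have h1 : p ∣ M := hcard ▸ (h0.mul_right _)
    have := Nat.eq_one_of_dvd_coprimes hc dvd_rfl h1
    exact hp.one_lt.ne' this
  have : CharP (AddMonoidAlgebra (ZMod p) (ZMod M)) p :=
    charP_of_injective_algebraMap (algebraMap (ZMod p) (AddMonoidAlgebra (ZMod p) (ZMod M))).injective p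
  let s : ZMod M → AddMonoidAlgebra (ZMod p) (ZMod M) := fun z => AddMonoidAlgebra.single z 1
  have smul : ∀ x y, s x * s y = s (x + y) := fun x y => by
    simp [s, AddMonoidAlgebra.single_mul_single]
  have spow : ∀ x, s x ^ p = s ((p : ZMod M) * x) := fun x => by
    simp [s, AddMonoidAlgebra.single_pow]
  let U : AddMonoidAlgebra (ZMod p) (ZMod M) := ∑ z, s z
  have hsU : ∀ x, s x * U = U := fun x => by
    simp only [U, Finset.mul_sum, smul]
    exact Equiv.sum_comp (Equiv.addLeft x) s
  have hFU : (∑ i, s (f i)) * U = (Fintype.card ι : ZMod p) • U := by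
    rw [Finset.sum_mul]; simp [hsU, Nat.cast_smul_eq_nsmul]
  have hFkU : ∀ k : ℕ, (∑ i, s (f i)) ^ k * U = ((Fintype.card ι : ZMod p) ^ k) • U := by
    intro k
    induction k with
    | zero => simp
    | succ k ih => rw [pow_succ, mul_assoc, hFU, mul_smul_comm, ih, smul_smul, pow_succ']
  have hFG : (∑ i, s (f i)) * (∑ j, s (g j)) = U := by
    rw [Finset.sum_mul_sum, ← Finset.sum_product']
    simp only [smul]
    exact Function.Bijective.sum_comp h s
  have key : ∑ x : ι × κ, s ((p : ZMod M) * f x.1 + g x.2) = ((Fintype.card ι : ZMod p) ^ (p-1)) • U := by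
    rw [← hFkU, ← hFG, ← mul_assoc, ← pow_succ, Nat.sub_add_cancel hp.one_le, sum_pow_char p,
      Finset.sum_mul_sum, ← Finset.sum_product']
    simp only [spow, smul]
    rfl
  refine (Fintype.bijective_iff_surjective_and_card _).2 ⟨?_, by
    rw [Fintype.card_prod, ZMod.card, hcard]⟩
  intro z
  by_contra hz
  push Not at hz
  have e := congrArg (fun w : AddMonoidAlgebra (ZMod p) (ZMod M) => w.coeff z) key
  simp [s, U, Finsupp.finsetSum_apply, Finsupp.single_apply] at e
  have hempty : (Finset.univ.filter fun x : ι × κ => (p : ZMod M) * f x.1 + g x.2 = z) = ∅ :=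
    Finset.filter_false_of_mem fun x _ => hz x
  rw [hempty, Finset.card_empty, Nat.cast_zero] at e
  exact pow_ne_zero _ hι e.symm

lemma cast_dvd_imp {M : ℕ} [NeZero M] (a b : ℕ) (ha : a ∣ M) (h : (a : ZMod M) ∣ (b : ZMod M)) :
    a ∣ b := by
  obtain ⟨c, hc⟩ := h
  rw [← ZMod.natCast_zmod_val c, ← Nat.cast_mul, ZMod.natCast_eq_natCast_iff] at hc
  exact (hc.dvd_iff ha).2 (dvd_mul_right _ _)

lemma assoc_of_dvd {M : ℕ} [NeZero M] (x y : ZMod M)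
    (h : ∀ e : ℕ, e ∣ M → ((e : ZMod M) ∣ x ↔ (e : ZMod M) ∣ y)) : ∃ u : ZMod M, IsUnit u ∧ y = u * x := by
  obtain ⟨d1, h1, u1, hu1, rfl⟩ := ZMod.eq_unit_mul_divisor x
  obtain ⟨d2, h2, u2, hu2, rfl⟩ := ZMod.eq_unit_mul_divisor y
  have a1 := (h d1 h1).1 (dvd_mul_left _ _)
  have a2 := (h d2 h2).2 (dvd_mul_left _ _)
  rw [hu2.dvd_mul_left] at a1
  rw [hu1.dvd_mul_left] at a2
  have : d1 = d2 := Nat.dvd_antisymm (cast_dvd_imp _ _ h1 a1) (cast_dvd_imp _ _ h2 a2)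
  subst this
  obtain ⟨v, rfl⟩ := hu1
  refine ⟨u2 * ↑v⁻¹, hu2.mul v⁻¹.isUnit, ?_⟩
  rw [mul_assoc, Units.inv_mul_cancel_left]

lemma tij {M : ℕ} [NeZero M] {ι κ : Type} [Fintype ι] [Fintype κ] (g : κ → ZMod M) (k : ℕ) :
    k.Coprime M → ∀ f : ι → ZMod M,
    Function.Bijective (fun x : ι × κ => f x.1 + g x.2) →
    Function.Bijective (fun x : ι × κ => (k : ZMod M) * f x.1 + g x.2) := by
  induction k using induction_on_primes with
  | zero =>
    intro hc f h
    have hM : M = 1 := by simpa using hc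
    subst hM
    convert h using 2
    exact Subsingleton.elim _ _
  | one => intro _ f h; simpa using h
  | prime_mul p a hp ih =>
    intro hc f h
    have h1 := ih (Nat.Coprime.coprime_mul_left hc) f h
    have h2 := tij_prime (fun i => (a : ZMod M) * f i) g h1 p hp (Nat.Coprime.coprime_mul_right hc)
    simpa [mul_assoc] using h2

lemma sands {M : ℕ} [NeZero M] (A B : Finset (ZMod M))
    (ht : IsTiling M (A : Set (ZMod M)) (B : Set (ZMod M))) (a a' b b' : ZMod M)
    (ha : a ∈ A) (ha' : a' ∈ A) (hb : b ∈ B) (hb' : b' ∈ B) (u : ZMod M) (hu : IsUnit u)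
    (h : b - b' = u * (a - a')) : b = b' := by
  have hbij : Function.Bijective (fun x : A × B => (x.1 : ZMod M) + (x.2 : ZMod M)) := by
    constructor
    · rintro ⟨⟨x, hx⟩, ⟨y, hy⟩⟩ ⟨⟨x', hx'⟩, ⟨y', hy'⟩⟩ h
      simp only at h
      have := (ht (x + y)).unique (y₁ := (x, y)) (y₂ := (x', y')) ⟨hx, hy, rfl⟩ ⟨hx', hy', h.symm⟩
      simp only [Prod.mk.injEq] at this
      simp [this.1, this.2]
    · intro z
      obtain ⟨⟨x, y⟩, ⟨hx, hy, hxy⟩, _⟩ := ht z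
      exact ⟨(⟨x, hx⟩, ⟨y, hy⟩), hxy⟩
  have hk : u.val.Coprime M := by
    rw [← ZMod.isUnit_iff_coprime, ZMod.natCast_zmod_val]; exact hu
  have := (tij (fun x : B => (x : ZMod M)) u.val hk (fun x : A => (x : ZMod M)) hbij).1
    (a₁ := (⟨a, ha⟩, ⟨b', hb'⟩)) (a₂ := (⟨a', ha'⟩, ⟨b, hb⟩)) (by
      simp only [ZMod.natCast_zmod_val]
      linear_combination -h)
  simp only [Prod.mk.injEq, Subtype.mk.injEq] at this
  exact this.2.symm

lemma assoc_line {M : ℕ} [NeZero M] (P N : ℕ) (hpr : ∀ e, e ∣ M → P ∣ e ∨ e ∣ N) (u v : ZMod M)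
    (h : (N : ZMod M) ∣ u - v) (hu : ¬ (P : ZMod M) ∣ u) (hv : ¬ (P : ZMod M) ∣ v) :
    ∃ c : ZMod M, IsUnit c ∧ v = c * u := by
  apply assoc_of_dvd
  intro e he
  have aux : ∀ w : ZMod M, ¬ (P : ZMod M) ∣ w → (e : ZMod M) ∣ w → (e : ZMod M) ∣ u - v := by
    intro w hw hew
    rcases hpr e he with h1 | h1
    · exact absurd ((Nat.cast_dvd_cast h1).trans hew) hw
    · exact (Nat.cast_dvd_cast h1).trans h
  constructor
  · intro h1
    have := dvd_sub h1 (aux u hu h1)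
    rwa [sub_sub_cancel] at this
  · intro h1
    have := dvd_add h1 (aux v hv h1)
    rwa [add_sub_cancel] at this

lemma prime_split {M p n N : ℕ} (hp : p.Prime) (hM : M = p ^ n * N) (e : ℕ) (he : e ∣ M) :
    p ^ n ∣ e ∨ e ∣ M / p := by
  obtain ⟨k, hk⟩ := he
  by_cases h : p ∣ k
  · right
    obtain ⟨k', rfl⟩ := h
    refine ⟨k', ?_⟩
    rw [hk]
    apply Nat.div_eq_of_eq_mul_left hp.pos
    ring
  · left
    have hc : (p ^ n).Coprime k := Nat.Coprime.pow_left _ ((Nat.Prime.coprime_iff_not_dvd hp).2 h)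
    apply hc.dvd_of_dvd_mul_right
    rw [← hk, hM]; exact dvd_mul_right _ _

lemma dtr {K : Type*} [CommRing K] {P a b c : K} (h : P ∣ a - b) (h' : P ∣ b - c) : P ∣ a - c := by
  simpa using dvd_add h h'
lemma dsy {K : Type*} [CommRing K] {P a b : K} (h : P ∣ a - b) : P ∣ b - a := by
  rwa [← neg_sub, dvd_neg]

lemma crt3 {K : Type*} [CommRing K] (P Q R x y z : K) (h1 : IsCoprime P Q) (h2 : IsCoprime P R)
    (h3 : IsCoprime Q R) : ∃ w, P ∣ w - x ∧ Q ∣ w - y ∧ R ∣ w - z := by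
  have two : ∀ (P Q x y : K), IsCoprime P Q → ∃ w, P ∣ w - x ∧ Q ∣ w - y := by
    rintro P Q x y ⟨a, b, h⟩
    exact ⟨a * P * y + b * Q * x, ⟨a * (y - x), by linear_combination x * h⟩,
      ⟨b * (x - y), by linear_combination y * h⟩⟩
  obtain ⟨w, hw1, hw2⟩ := two P Q x y h1
  obtain ⟨v, hv1, hv2⟩ := two (P * Q) R w z (h2.mul_left h3)
  exact ⟨v, dtr ((dvd_mul_right _ _).trans hv1) hw1, dtr ((dvd_mul_left _ _).trans hv1) hw2, hv2⟩

lemma mul3_dvd {K : Type*} [CommRing K] {P Q R z : K} (h1 : IsCoprime P Q) (h2 : IsCoprime P R)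
    (h3 : IsCoprime Q R) : P * Q * R ∣ z ↔ P ∣ z ∧ Q ∣ z ∧ R ∣ z := by
  constructor
  · intro h
    exact ⟨((dvd_mul_right _ _).mul_right _).trans h, ((dvd_mul_left _ _).mul_right _).trans h,
      (dvd_mul_left _ _).trans h⟩
  · rintro ⟨a, b, c⟩
    exact (h2.mul_left h3).mul_dvd (h1.mul_dvd a b) c

lemma grid_self {M : ℕ} (x : ZMod M) (N : ℕ) : x ∈ gridSet M x N := by simp [gridSet]

lemma grid_eq {M : ℕ} {x y : ZMod M} {N : ℕ} (h : y ∈ gridSet M x N) : gridSet M y N = gridSet M x N := by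
  ext z
  exact ⟨fun hz => dtr hz h, fun hz => dtr hz (dsy h)⟩

lemma plane_fib {M : ℕ} (A Lam : Set (ZMod M)) (F : Set (Set (ZMod M))) (Ni Nij pj : ℕ)
    (hF : ∀ f ∈ F, ∃ x, f = gridSet M x Ni ∨ f = gridSet M x (M / pj))
    (hdis : ∀ f ∈ F, ∀ g ∈ F, f ≠ g → Disjoint f g)
    (hU : ⋃₀ F = A ∩ Lam)
    (hsub : (Nij : ZMod M) ∣ ((M / pj : ℕ) : ZMod M))
    (hplane : ∀ s ∈ Lam, gridSet M s Nij ⊆ Lam)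
    (hmeet : ∀ s x, x ∈ gridSet M s Nij → ∃ y, y ∈ gridSet M x Ni ∧ y ∈ gridSet M s (M / pj))
    (s : ZMod M) (hs : s ∈ Lam) (hf : gridSet M s (M / pj) ∈ F) :
    Fibered M pj (A ∩ gridSet M s Nij) := by
  rintro x ⟨hxA, hxs⟩
  have hxL : x ∈ A ∩ Lam := ⟨hxA, hplane s hs hxs⟩
  have main : gridSet M x (M / pj) ∈ F := by
    rw [← hU] at hxL
    obtain ⟨g, hg, hxg⟩ := hxL
    obtain ⟨t, rfl | rfl⟩ := hF g hg
    · obtain ⟨y, hy1, hy2⟩ := hmeet s x hxs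
      rw [grid_eq hxg] at hy1
      have : gridSet M t Ni = gridSet M s (M / pj) := by
        by_contra hne
        exact Set.disjoint_left.1 (hdis _ hg _ hf hne) hy1 hy2
      rw [this] at hxg
      rwa [grid_eq hxg]
    · rwa [grid_eq hxg]
  intro y hy
  have : y ∈ A ∩ Lam := by rw [← hU]; exact ⟨_, main, hy⟩
  exact ⟨this.1, dtr (hsub.trans hy) hxs⟩

lemma gcd_line {M r : ℕ} [NeZero M] (hr : r.Prime) (hrM : r ∣ M) (d : ZMod M) (hd : d ≠ 0)
    (h : ((M / r : ℕ) : ZMod M) ∣ d) : Nat.gcd d.val M = M / r := by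
  have hdv : M / r ∣ d.val := by
    apply cast_dvd_imp (M := M) _ _ (Nat.div_dvd_of_dvd hrM)
    rwa [ZMod.natCast_zmod_val]
  have h1 : M / r ∣ Nat.gcd d.val M := Nat.dvd_gcd hdv (Nat.div_dvd_of_dvd hrM)
  obtain ⟨e, he⟩ := h1
  have hpos : 0 < M / r := Nat.div_pos (Nat.le_of_dvd (NeZero.pos M) hrM) hr.pos
  have h2 : M / r * e ∣ M / r * r := by
    rw [← he, Nat.div_mul_cancel hrM]; exact Nat.gcd_dvd_right _ _
  have h3 := Nat.dvd_of_mul_dvd_mul_left hpos h2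
  rcases (Nat.dvd_prime hr).1 h3 with rfl | rfl
  · simpa using he
  · rw [Nat.div_mul_cancel hrM] at he
    exfalso
    have : M ∣ d.val := by
      have h5 := Nat.gcd_dvd_left d.val M
      rwa [he] at h5
    rw [← ZMod.natCast_eq_zero_iff, ZMod.natCast_zmod_val] at this
    exact hd this

lemma two_dir {M : ℕ} [NeZero M] (p q r : ℕ) (hr : r.Prime) (hrM : r ∣ M)
    (P P1 Q Q1 R R1 : ZMod M) (hP : P1 ∣ P) (hQ : Q1 ∣ Q) (hR : R1 ∣ R)
    (cPQ : IsCoprime P Q) (cPR : IsCoprime P R) (cQR : IsCoprime Q R)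
    (gp : ∀ z : ZMod M, ((M / p : ℕ) : ZMod M) ∣ z ↔ P1 ∣ z ∧ Q ∣ z ∧ R ∣ z)
    (gq : ∀ z : ZMod M, ((M / q : ℕ) : ZMod M) ∣ z ↔ P ∣ z ∧ Q1 ∣ z ∧ R ∣ z)
    (gr : ∀ z : ZMod M, ((M / r : ℕ) : ZMod M) ∣ z ↔ P ∣ z ∧ Q ∣ z ∧ R1 ∣ z)
    (gpq : ∀ z : ZMod M, ((M / (p * q) : ℕ) : ZMod M) ∣ z ↔ P1 ∣ z ∧ Q1 ∣ z ∧ R ∣ z)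
    (D : ℕ) (gD : ∀ z : ZMod M, (D : ZMod M) ∣ z ↔ P1 ∣ z ∧ Q1 ∣ z ∧ R1 ∣ z)
    (A : Set (ZMod M)) (x0 : ZMod M) (F : Set (Set (ZMod M)))
    (hF : ∀ f ∈ F, ∃ x, f = gridSet M x (M / p) ∨ f = gridSet M x (M / q))
    (hdis : ∀ f ∈ F, ∀ g ∈ F, f ≠ g → Disjoint f g)
    (hU : ⋃₀ F = A ∩ gridSet M x0 D)
    (hnp : ¬ Fibered M p (A ∩ gridSet M x0 D))
    (hnq : ¬ Fibered M q (A ∩ gridSet M x0 D)) :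
    ExtCorner M r p q A (gridSet M x0 D) := by
  have hplane : ∀ s ∈ gridSet M x0 D, gridSet M s (M / (p * q)) ⊆ gridSet M x0 D := by
    intro s hs y hy
    have := (gpq _).1 hy
    exact dtr ((gD _).2 ⟨this.1, this.2.1, hR.trans this.2.2⟩) hs
  have hsubq : ((M / (p * q) : ℕ) : ZMod M) ∣ ((M / q : ℕ) : ZMod M) := by
    have := (gq _).1 dvd_rfl
    exact (gpq _).2 ⟨hP.trans this.1, this.2.1, this.2.2⟩
  have hsubp : ((M / (p * q) : ℕ) : ZMod M) ∣ ((M / p : ℕ) : ZMod M) := by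
    have := (gp _).1 dvd_rfl
    exact (gpq _).2 ⟨this.1, hQ.trans this.2.1, this.2.2⟩
  have hintq : ∀ s x, x ∈ gridSet M s (M / (p * q)) →
      ∃ y, y ∈ gridSet M x (M / p) ∧ y ∈ gridSet M s (M / q) := by
    intro s x hx
    obtain ⟨h1, h2, h3⟩ := (gpq _).1 hx
    obtain ⟨y, y1, y2, y3⟩ := crt3 P Q R s x x cPQ cPR cQR
    exact ⟨y, (gp _).2 ⟨dtr (hP.trans y1) (dsy h1), y2, y3⟩,
      (gq _).2 ⟨y1, dtr (hQ.trans y2) h2, dtr y3 h3⟩⟩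
  have hintp : ∀ s x, x ∈ gridSet M s (M / (p * q)) →
      ∃ y, y ∈ gridSet M x (M / q) ∧ y ∈ gridSet M s (M / p) := by
    intro s x hx
    obtain ⟨h1, h2, h3⟩ := (gpq _).1 hx
    obtain ⟨y, y1, y2, y3⟩ := crt3 P Q R x s x cPQ cPR cQR
    exact ⟨y, (gq _).2 ⟨y1, dtr (hQ.trans y2) (dsy h2), y3⟩,
      (gp _).2 ⟨dtr (hP.trans y1) h1, y2, dtr y3 h3⟩⟩
  unfold Fibered at hnp hnq
  push Not at hnp hnq
  obtain ⟨s, hs, hsn⟩ := hnp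
  obtain ⟨t, ht, htn⟩ := hnq
  have hfq : gridSet M s (M / q) ∈ F := by
    have hs' := hs
    rw [← hU] at hs'
    obtain ⟨f, hf, hsf⟩ := hs'
    obtain ⟨x, rfl | rfl⟩ := hF f hf
    · refine absurd ?_ hsn
      rw [grid_eq hsf, ← hU]
      exact Set.subset_sUnion_of_mem hf
    · rwa [grid_eq hsf]
  have hfp : gridSet M t (M / p) ∈ F := by
    have ht' := ht
    rw [← hU] at ht'
    obtain ⟨f, hf, htf⟩ := ht'
    obtain ⟨x, rfl | rfl⟩ := hF f hf
    · rwa [grid_eq htf]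
    · refine absurd ?_ htn
      rw [grid_eq htf, ← hU]
      exact Set.subset_sUnion_of_mem hf
  have fibq : Fibered M q (A ∩ gridSet M s (M / (p * q))) :=
    plane_fib A _ F (M / p) (M / (p * q)) q hF hdis hU hsubq hplane hintq s hs.2 hfq
  have fibp : Fibered M p (A ∩ gridSet M t (M / (p * q))) :=
    plane_fib A _ F (M / q) (M / (p * q)) p (fun f hf => (hF f hf).imp fun _ h => h.symm)
      hdis hU hsubp hplane hintp t ht.2 hfp
  have nfibp : ¬ Fibered M p (A ∩ gridSet M s (M / (p * q))) := by
    intro h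
    exact hsn ((h s ⟨hs.1, grid_self _ _⟩).trans
      (Set.inter_subset_inter_right _ (hplane s hs.2)))
  have nfibq : ¬ Fibered M q (A ∩ gridSet M t (M / (p * q))) := by
    intro h
    exact htn ((h t ⟨ht.1, grid_self _ _⟩).trans
      (Set.inter_subset_inter_right _ (hplane t ht.2)))
  have hst : (D : ZMod M) ∣ s - t := dtr hs.2 (dsy ht.2)
  obtain ⟨e1, e2, e3⟩ := (gD _).1 hst
  obtain ⟨a, a1, a2, a3⟩ := crt3 P Q R s t t cPQ cPR cQR
  obtain ⟨b, b1, b2, b3⟩ := crt3 P Q R s t s cPQ cPR cQR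
  have hap : a ∈ gridSet M t (M / p) := (gp _).2 ⟨dtr (hP.trans a1) e1, a2, a3⟩
  have hbq : b ∈ gridSet M s (M / q) := (gq _).2 ⟨b1, dtr (hQ.trans b2) (dsy e2), b3⟩
  have haS : a ∈ A ∩ gridSet M x0 D := hU ▸ Set.subset_sUnion_of_mem hfp hap
  have hbS : b ∈ A ∩ gridSet M x0 D := hU ▸ Set.subset_sUnion_of_mem hfq hbq
  have hapl : gridSet M a (M / (p * q)) = gridSet M t (M / (p * q)) := grid_eq (hsubp.trans hap)
  have hbpl : gridSet M b (M / (p * q)) = gridSet M s (M / (p * q)) := grid_eq (hsubq.trans hbq)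
  refine ⟨a, haS, b, hbS, ?_, ?_, ?_, ?_, ?_⟩
  · apply gcd_line hr hrM
    · intro h
      have hab : a = b := sub_eq_zero.1 h
      rw [hab, hbpl] at hapl
      rw [← hapl] at nfibq
      exact nfibq fibq
    · exact (gr _).2 ⟨dtr a1 (dsy b1), dtr a2 (dsy b2),
        dtr (hR.trans a3) (dtr (dsy e3) (dsy (hR.trans b3)))⟩
  · rwa [hapl]
  · rwa [hapl]
  · rwa [hbpl]
  · rwa [hbpl]

lemma step1 {M : ℕ} [NeZero M] (p q P P1 : ℕ) (Q Q1 R : ZMod M) (hP : (P1 : ZMod M) ∣ (P : ZMod M)) (hQ : Q1 ∣ Q)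
    (cPQ : IsCoprime (P : ZMod M) Q) (cPR : IsCoprime (P : ZMod M) R) (cQR : IsCoprime Q R)
    (hpr : ∀ e, e ∣ M → P ∣ e ∨ e ∣ M / p)
    (gp : ∀ z : ZMod M, ((M / p : ℕ) : ZMod M) ∣ z ↔ (P1 : ZMod M) ∣ z ∧ Q ∣ z ∧ R ∣ z)
    (gq : ∀ z : ZMod M, ((M / q : ℕ) : ZMod M) ∣ z ↔ (P : ZMod M) ∣ z ∧ Q1 ∣ z ∧ R ∣ z)
    (A : Finset (ZMod M)) (u v t w a : ZMod M)
    (hvt : (P1 : ZMod M) ∣ v - t) (huv : Q1 ∣ u - v)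
    (hq : gridSet M v (M / q) ⊆ (A : Set (ZMod M)))
    (w1 : (P : ZMod M) ∣ w - t) (w2 : Q ∣ w - u) (w3 : R ∣ w - v) (ha : a ∈ A)
    (hd : ¬ (P1 : ZMod M) ∣ a - w) :
    ∃ s ∈ A, ∃ s' ∈ A, ∃ c : ZMod M, IsUnit c ∧ a - w = c * (s - s') := by
  obtain ⟨y, y1, y2, y3⟩ := crt3 (P : ZMod M) Q R v u v cPQ cPR cQR
  have hy : y ∈ gridSet M v (M / q) := (gq _).2 ⟨y1, dtr (hQ.trans y2) huv, y3⟩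
  have hwy1 : (P1 : ZMod M) ∣ w - y := dtr (hP.trans w1) (dtr (dsy hvt) (hP.trans (dsy y1)))
  have hwy : ((M / p : ℕ) : ZMod M) ∣ w - y := (gp _).2 ⟨hwy1, dtr w2 (dsy y2), dtr w3 (dsy y3)⟩
  refine ⟨a, ha, y, hq hy, assoc_line P (M / p) hpr _ _ ?_ ?_ ?_⟩
  · have e : a - y - (a - w) = w - y := by ring
    rwa [e]
  · intro h
    exact hd (dtr (hP.trans h) (dsy hwy1))
  · intro h
    exact hd (hP.trans h)

lemma step2 {M : ℕ} [NeZero M] (p q r P P1 : ℕ) (Q Q1 R R1 : ZMod M) (hP : (P1 : ZMod M) ∣ (P : ZMod M))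
    (hQ : Q1 ∣ Q) (hR : R1 ∣ R)
    (cPQ : IsCoprime (P : ZMod M) Q) (cPR : IsCoprime (P : ZMod M) R) (cQR : IsCoprime Q R)
    (hpr : ∀ e, e ∣ M → P ∣ e ∨ e ∣ M / p)
    (gp : ∀ z : ZMod M, ((M / p : ℕ) : ZMod M) ∣ z ↔ (P1 : ZMod M) ∣ z ∧ Q ∣ z ∧ R ∣ z)
    (gq : ∀ z : ZMod M, ((M / q : ℕ) : ZMod M) ∣ z ↔ (P : ZMod M) ∣ z ∧ Q1 ∣ z ∧ R ∣ z)
    (gr : ∀ z : ZMod M, ((M / r : ℕ) : ZMod M) ∣ z ↔ (P : ZMod M) ∣ z ∧ Q ∣ z ∧ R1 ∣ z)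
    (A : Finset (ZMod M)) (v t d : ZMod M)
    (vtP : (P1 : ZMod M) ∣ v - t) (vtQ : Q1 ∣ v - t) (vtR : R1 ∣ v - t)
    (hne : ¬ (P : ZMod M) ∣ v - t)
    (hq : gridSet M v (M / q) ⊆ (A : Set (ZMod M)))
    (hr : gridSet M t (M / r) ⊆ (A : Set (ZMod M)))
    (dP : (P1 : ZMod M) ∣ d) (dQ : Q1 ∣ d) (dR : R1 ∣ d) (hd : ¬ (P : ZMod M) ∣ d) :
    ∃ s ∈ A, ∃ s' ∈ A, ∃ c : ZMod M, IsUnit c ∧ d = c * (s - s') := by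
  obtain ⟨s, s1, s2, s3⟩ := crt3 (P : ZMod M) Q R v (t + d) v cPQ cPR cQR
  obtain ⟨s', s1', s2', s3'⟩ := crt3 (P : ZMod M) Q R t t (v - d) cPQ cPR cQR
  have hs : s ∈ gridSet M v (M / q) := by
    refine (gq _).2 ⟨s1, dtr (hQ.trans s2) ?_, s3⟩
    have e : t + d - v = d - (v - t) := by ring
    rw [e]; exact dvd_sub dQ vtQ
  have hs' : s' ∈ gridSet M t (M / r) := by
    refine (gr _).2 ⟨s1', s2', dtr (hR.trans s3') ?_⟩
    have e : v - d - t = (v - t) - d := by ring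
    rw [e]; exact dvd_sub vtR dR
  refine ⟨s, hq hs, s', hr hs', assoc_line P (M / p) hpr _ _ ?_ ?_ hd⟩
  · refine (gp _).2 ⟨?_, ?_, ?_⟩
    · have e : s - s' - d = (s - v) - (s' - t) + (v - t) - d := by ring
      rw [e]
      exact dvd_sub (dvd_add (dvd_sub (hP.trans s1) (hP.trans s1')) vtP) dP
    · have e : s - s' - d = (s - (t + d)) - (s' - t) := by ring
      rw [e]; exact dvd_sub s2 s2'
    · have e : s - s' - d = (s - v) - (s' - (v - d)) := by ring
      rw [e]; exact dvd_sub s3 s3'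
  · intro h
    apply hne
    have e : v - t = (s - s') - (s - v) + (s' - t) := by ring
    rw [e]
    exact dvd_add (dvd_sub h s1) s1'

lemma skew {M : ℕ} (q r : ℕ) (P Q Q1 R R1 : ZMod M) (hQ : Q1 ∣ Q) (hR : R1 ∣ R)
    (cPQ : IsCoprime P Q) (cPR : IsCoprime P R) (cQR : IsCoprime Q R)
    (gq : ∀ z : ZMod M, ((M / q : ℕ) : ZMod M) ∣ z ↔ P ∣ z ∧ Q1 ∣ z ∧ R ∣ z)
    (gr : ∀ z : ZMod M, ((M / r : ℕ) : ZMod M) ∣ z ↔ P ∣ z ∧ Q ∣ z ∧ R1 ∣ z)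
    (v t : ZMod M) (vtQ : Q1 ∣ v - t) (vtR : R1 ∣ v - t)
    (hdis : Disjoint (gridSet M v (M / q)) (gridSet M t (M / r))) : ¬ P ∣ v - t := by
  intro h
  obtain ⟨y, y1, y2, y3⟩ := crt3 P Q R v t v cPQ cPR cQR
  have m1 : y ∈ gridSet M v (M / q) := (gq _).2 ⟨y1, dtr (hQ.trans y2) (dsy vtQ), y3⟩
  have m2 : y ∈ gridSet M t (M / r) := (gr _).2 ⟨dtr y1 h, y2, dtr (hR.trans y3) vtR⟩
  exact Set.disjoint_left.1 hdis m1 m2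

lemma grid_ne {M : ℕ} (p q : ℕ) (P : ZMod M) (hP : P ∣ ((M / q : ℕ) : ZMod M))
    (hn : ¬ P ∣ ((M / p : ℕ) : ZMod M)) (x y : ZMod M) :
    gridSet M x (M / p) ≠ gridSet M y (M / q) := by
  intro h
  have h1 : x ∈ gridSet M y (M / q) := h ▸ grid_self x _
  have h2 : x + ((M / p : ℕ) : ZMod M) ∈ gridSet M y (M / q) := by
    rw [← h]; simp [gridSet]
  apply hn
  have h3 := hP.trans (dtr h2 (dsy h1))
  simpa using h3

/-- A point `w` on a `p`-fiber that meets a `q`-fiber of the partition cannot be covered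
by a `p`-fiber of the partition. -/
lemma no_cover {M : ℕ} (p q : ℕ) (F : Set (Set (ZMod M)))
    (hdis : ∀ f ∈ F, ∀ g ∈ F, f ≠ g → Disjoint f g)
    (P P1 Q Q1 R : ZMod M) (hP : P1 ∣ P) (hQ : Q1 ∣ Q)
    (cPQ : IsCoprime P Q) (cPR : IsCoprime P R) (cQR : IsCoprime Q R)
    (gp : ∀ z : ZMod M, ((M / p : ℕ) : ZMod M) ∣ z ↔ P1 ∣ z ∧ Q ∣ z ∧ R ∣ z)
    (gq : ∀ z : ZMod M, ((M / q : ℕ) : ZMod M) ∣ z ↔ P ∣ z ∧ Q1 ∣ z ∧ R ∣ z)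
    (hn : ¬ P ∣ ((M / p : ℕ) : ZMod M))
    (u v t w x : ZMod M) (hvt : P1 ∣ v - t) (huv : Q1 ∣ u - v)
    (w1 : P ∣ w - t) (w2 : Q ∣ w - u) (w3 : R ∣ w - v)
    (hv : gridSet M v (M / q) ∈ F) (hx : gridSet M x (M / p) ∈ F) : w ∉ gridSet M x (M / p) := by
  intro hw
  obtain ⟨y, y1, y2, y3⟩ := crt3 P Q R v u v cPQ cPR cQR
  have hy : y ∈ gridSet M v (M / q) := (gq _).2 ⟨y1, dtr (hQ.trans y2) huv, y3⟩
  have hyw : y ∈ gridSet M w (M / p) :=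
    (gp _).2 ⟨dtr (hP.trans y1) (dtr hvt (hP.trans (dsy w1))), dtr y2 (dsy w2), dtr y3 (dsy w3)⟩
  rw [grid_eq hw] at hyw
  exact Set.disjoint_left.1
    (hdis _ hx _ hv (grid_ne p q P ((gq _).1 dvd_rfl).1 hn x v)) hyw hy

lemma three_dir {M : ℕ} [NeZero M] (p q r P P1 Q Q1 R R1 : ℕ)
    (hP : (P1 : ZMod M) ∣ (P : ZMod M)) (hQ : (Q1 : ZMod M) ∣ (Q : ZMod M))
    (hR : (R1 : ZMod M) ∣ (R : ZMod M))
    (cPQ : IsCoprime (P : ZMod M) (Q : ZMod M)) (cPR : IsCoprime (P : ZMod M) (R : ZMod M))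
    (cQR : IsCoprime (Q : ZMod M) (R : ZMod M))
    (hz : ∀ z : ZMod M, (P : ZMod M) ∣ z → (Q : ZMod M) ∣ z → (R : ZMod M) ∣ z → z = 0)
    (prP : ∀ e, e ∣ M → P ∣ e ∨ e ∣ M / p) (prQ : ∀ e, e ∣ M → Q ∣ e ∨ e ∣ M / q)
    (prR : ∀ e, e ∣ M → R ∣ e ∨ e ∣ M / r)
    (nP : ¬ (P : ZMod M) ∣ ((M / p : ℕ) : ZMod M)) (nQ : ¬ (Q : ZMod M) ∣ ((M / q : ℕ) : ZMod M))
    (nR : ¬ (R : ZMod M) ∣ ((M / r : ℕ) : ZMod M))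
    (gp : ∀ z : ZMod M, ((M / p : ℕ) : ZMod M) ∣ z ↔ (P1 : ZMod M) ∣ z ∧ (Q : ZMod M) ∣ z ∧ (R : ZMod M) ∣ z)
    (gq : ∀ z : ZMod M, ((M / q : ℕ) : ZMod M) ∣ z ↔ (P : ZMod M) ∣ z ∧ (Q1 : ZMod M) ∣ z ∧ (R : ZMod M) ∣ z)
    (gr : ∀ z : ZMod M, ((M / r : ℕ) : ZMod M) ∣ z ↔ (P : ZMod M) ∣ z ∧ (Q : ZMod M) ∣ z ∧ (R1 : ZMod M) ∣ z)
    (D : ℕ) (gD : ∀ z : ZMod M, (D : ZMod M) ∣ z ↔ (P1 : ZMod M) ∣ z ∧ (Q1 : ZMod M) ∣ z ∧ (R1 : ZMod M) ∣ z)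
    (A B : Finset (ZMod M)) (htile : IsTiling M (A : Set (ZMod M)) (B : Set (ZMod M)))
    (x0 : ZMod M) (F : Set (Set (ZMod M)))
    (hF : ∀ f ∈ F, ∃ x : ZMod M,
        f = gridSet M x (M / p) ∨ f = gridSet M x (M / q) ∨ f = gridSet M x (M / r))
    (hdis : ∀ f ∈ F, ∀ g ∈ F, f ≠ g → Disjoint f g)
    (hU : ⋃₀ F = (A : Set (ZMod M)) ∩ gridSet M x0 D)
    (u v t : ZMod M) (hu : gridSet M u (M / p) ∈ F) (hv : gridSet M v (M / q) ∈ F)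
    (ht : gridSet M t (M / r) ∈ F) : False := by
  have cQP := cPQ.symm
  have cRP := cPR.symm
  have cRQ := cQR.symm
  have gp' : ∀ z : ZMod M, ((M / p : ℕ) : ZMod M) ∣ z ↔ (Q : ZMod M) ∣ z ∧ (R : ZMod M) ∣ z ∧ (P1 : ZMod M) ∣ z :=
    fun z => (gp z).trans (by tauto)
  have gp'' : ∀ z : ZMod M, ((M / p : ℕ) : ZMod M) ∣ z ↔ (R : ZMod M) ∣ z ∧ (P1 : ZMod M) ∣ z ∧ (Q : ZMod M) ∣ z :=
    fun z => (gp z).trans (by tauto)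
  have gq' : ∀ z : ZMod M, ((M / q : ℕ) : ZMod M) ∣ z ↔ (Q1 : ZMod M) ∣ z ∧ (R : ZMod M) ∣ z ∧ (P : ZMod M) ∣ z :=
    fun z => (gq z).trans (by tauto)
  have gq'' : ∀ z : ZMod M, ((M / q : ℕ) : ZMod M) ∣ z ↔ (R : ZMod M) ∣ z ∧ (P : ZMod M) ∣ z ∧ (Q1 : ZMod M) ∣ z :=
    fun z => (gq z).trans (by tauto)
  have gr' : ∀ z : ZMod M, ((M / r : ℕ) : ZMod M) ∣ z ↔ (Q : ZMod M) ∣ z ∧ (R1 : ZMod M) ∣ z ∧ (P : ZMod M) ∣ z :=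
    fun z => (gr z).trans (by tauto)
  have gr'' : ∀ z : ZMod M, ((M / r : ℕ) : ZMod M) ∣ z ↔ (R1 : ZMod M) ∣ z ∧ (P : ZMod M) ∣ z ∧ (Q : ZMod M) ∣ z :=
    fun z => (gr z).trans (by tauto)
  have sub : ∀ f ∈ F, f ⊆ (A : Set (ZMod M)) := fun f hf x hx => by
    have : x ∈ (A : Set (ZMod M)) ∩ gridSet M x0 D := hU ▸ Set.subset_sUnion_of_mem hf hx
    exact this.1
  have inL : ∀ f ∈ F, ∀ x ∈ f, (D : ZMod M) ∣ x - x0 := fun f hf x hx => by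
    have : x ∈ (A : Set (ZMod M)) ∩ gridSet M x0 D := hU ▸ Set.subset_sUnion_of_mem hf hx
    exact this.2
  have uL := inL _ hu u (grid_self _ _)
  have vL := inL _ hv v (grid_self _ _)
  have tL := inL _ ht t (grid_self _ _)
  obtain ⟨uv1, uv2, uv3⟩ := (gD _).1 (dtr uL (dsy vL))
  obtain ⟨vt1, vt2, vt3⟩ := (gD _).1 (dtr vL (dsy tL))
  obtain ⟨tu1, tu2, tu3⟩ := (gD _).1 (dtr tL (dsy uL))
  obtain ⟨w, w1, w2, w3⟩ := crt3 (P : ZMod M) Q R t u v cPQ cPR cQR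
  have wL : w ∈ gridSet M x0 D := by
    obtain ⟨t1, t2, t3⟩ := (gD _).1 tL
    obtain ⟨u1, u2, u3⟩ := (gD _).1 uL
    obtain ⟨v1, v2, v3⟩ := (gD _).1 vL
    exact (gD _).2 ⟨dtr (hP.trans w1) t1, dtr (hQ.trans w2) u2, dtr (hR.trans w3) v3⟩
  have wA : w ∉ A := by
    intro hw
    have hw' : w ∈ ⋃₀ F := by rw [hU]; exact ⟨hw, wL⟩
    obtain ⟨f, hf, hwf⟩ := hw'
    obtain ⟨x, rfl | rfl | rfl⟩ := hF f hf
    · exact no_cover p q F hdis P P1 Q Q1 R hP hQ cPQ cPR cQR gp gq nP u v t w x vt1 uv2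
        w1 w2 w3 hv hf hwf
    · exact no_cover q r F hdis Q Q1 R R1 P hQ hR cQR cQP cRP gq' gr' nQ v t u w x tu2 vt3
        w2 w3 w1 ht hf hwf
    · exact no_cover r p F hdis R R1 P P1 Q hR hP cRP cRQ cPQ gr'' gp'' nR t u v w x uv3 tu1
        w3 w1 w2 hu hf hwf
  have sk1 : ¬ (P : ZMod M) ∣ v - t :=
    skew q r P Q Q1 R R1 hQ hR cPQ cPR cQR gq gr v t vt2 vt3
      (hdis _ hv _ ht (grid_ne q r Q ((gr _).1 dvd_rfl).2.1 nQ v t))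
  have sk2 : ¬ (Q : ZMod M) ∣ t - u :=
    skew r p Q R R1 P P1 hR hP cQR cQP cRP gr' gp' t u tu3 tu1
      (hdis _ ht _ hu (grid_ne r p R ((gp _).1 dvd_rfl).2.2 nR t u))
  have sk3 : ¬ (R : ZMod M) ∣ u - v :=
    skew p q R P P1 Q Q1 hP hQ cRP cRQ cPQ gp'' gq'' u v uv1 uv2
      (hdis _ hu _ hv (grid_ne p q P ((gq _).1 dvd_rfl).1 nP u v))
  obtain ⟨⟨_, b⟩, ⟨-, hb, -⟩, -⟩ := htile 0
  obtain ⟨⟨a, b'⟩, ⟨ha, hb', hab⟩, -⟩ := htile (w + b)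
  simp only at hb ha hb' hab
  have hd : b - b' = a - w := by linear_combination -hab
  have fin : (∃ s ∈ A, ∃ s' ∈ A, ∃ c : ZMod M, IsUnit c ∧ a - w = c * (s - s')) → False := by
    rintro ⟨s, hs, s', hs', c, hc, h⟩
    have hbb := sands A B htile s s' b b' hs hs' hb hb' c hc (hd.trans h)
    rw [hbb, sub_self] at hd
    exact wA (by rwa [← sub_eq_zero.1 hd.symm])
  by_cases d1 : (P1 : ZMod M) ∣ a - w
  swap
  · exact fin (step1 p q P P1 Q Q1 R hP hQ cPQ cPR cQR prP gp gq A u v t w a vt1 uv2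
      (sub _ hv) w1 w2 w3 ha d1)
  by_cases d2 : (Q1 : ZMod M) ∣ a - w
  swap
  · exact fin (step1 q r Q Q1 R R1 P hQ hR cQR cQP cRP prQ gq' gr' A v t u w a tu2 vt3
      (sub _ ht) w2 w3 w1 ha d2)
  by_cases d3 : (R1 : ZMod M) ∣ a - w
  swap
  · exact fin (step1 r p R R1 P P1 Q hR hP cRP cRQ cPQ prR gr'' gp'' A t u v w a uv3 tu1
      (sub _ hu) w3 w1 w2 ha d3)
  by_cases e1 : (P : ZMod M) ∣ a - w
  swap
  · exact fin (step2 p q r P P1 Q Q1 R R1 hP hQ hR cPQ cPR cQR prP gp gq gr A v t _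
      vt1 vt2 vt3 sk1 (sub _ hv) (sub _ ht) d1 d2 d3 e1)
  by_cases e2 : (Q : ZMod M) ∣ a - w
  swap
  · exact fin (step2 q r p Q Q1 R R1 P P1 hQ hR hP cQR cQP cRP prQ gq' gr' gp' A t u _
      tu2 tu3 tu1 sk2 (sub _ ht) (sub _ hu) d2 d3 d1 e2)
  by_cases e3 : (R : ZMod M) ∣ a - w
  swap
  · exact fin (step2 r p q R R1 P P1 Q Q1 hR hP hQ cRP cRQ cPQ prR gr'' gp'' gq'' A u v _
      uv3 uv1 uv2 sk3 (sub _ hu) (sub _ hv) d3 d1 d2 e3)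
  exact wA (by rwa [← sub_eq_zero.1 (hz _ e1 e2 e3)])

lemma not_dvd_line {M p P N : ℕ} [NeZero M] (hp : p.Prime) (hM : M = P * N) (hpP : p ∣ P)
    (hc : P.Coprime N) : ¬ (P : ZMod M) ∣ ((M / p : ℕ) : ZMod M) := by
  intro h
  have hPM : P ∣ M := ⟨N, hM⟩
  have h1 := cast_dvd_imp P (M / p) hPM h
  have h2 : P * p ∣ P * N := by
    rw [← hM]
    calc P * p ∣ M / p * p := Nat.mul_dvd_mul_right h1 p
      _ = M := Nat.div_mul_cancel (hpP.trans hPM)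
  have hP0 : 0 < P := by
    rcases Nat.eq_zero_or_pos P with h0 | h0
    · exact absurd (by rw [hM, h0, zero_mul]) (NeZero.ne M)
    · exact h0
  have h3 : p ∣ N := Nat.dvd_of_mul_dvd_mul_left hP0 h2
  exact hp.one_lt.ne' (Nat.eq_one_of_dvd_coprimes hc hpP h3)

/-- Let `M = p_i^{n_i} p_j^{n_j} p_k^{n_k}`, `A ⊕ B = ℤ_M`, `Φ_M | A`.
If `A ∩ Λ` (for a `D(M)`-grid `Λ`) is nonempty, is a union of pairwise disjoint `M`-fibers,
but is not `M`-fibered in any single direction, then `A ∩ Λ` contains a `p_ν` extended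
corner for some `ν ∈ {i,j,k}`. -/
theorem statement12
    (pi pj pk : ℕ) (hpi : pi.Prime) (hpj : pj.Prime) (hpk : pk.Prime)
    (hij : pi ≠ pj) (hik : pi ≠ pk) (hjk : pj ≠ pk)
    (ni nj nk : ℕ) (hni : 1 ≤ ni) (hnj : 1 ≤ nj) (hnk : 1 ≤ nk)
    (M : ℕ) (hM : M = pi ^ ni * pj ^ nj * pk ^ nk)
    (A B : Finset (ZMod M))
    (htile : IsTiling M (A : Set (ZMod M)) (B : Set (ZMod M)))
    (hPhiM : cycDvd M M A)
    (x0 : ZMod M) (D : ℕ) (hD : D = pi ^ (ni - 1) * pj ^ (nj - 1) * pk ^ (nk - 1))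
    (hne : ((A : Set (ZMod M)) ∩ gridSet M x0 D).Nonempty)
    (hfib : ∃ F : Set (Set (ZMod M)),
      (∀ f ∈ F, ∃ x : ZMod M,
        f = gridSet M x (M / pi) ∨ f = gridSet M x (M / pj) ∨ f = gridSet M x (M / pk)) ∧
      (∀ f ∈ F, ∀ g ∈ F, f ≠ g → Disjoint f g) ∧
      ⋃₀ F = (A : Set (ZMod M)) ∩ gridSet M x0 D)
    (hnfi : ¬ Fibered M pi ((A : Set (ZMod M)) ∩ gridSet M x0 D))
    (hnfj : ¬ Fibered M pj ((A : Set (ZMod M)) ∩ gridSet M x0 D))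
    (hnfk : ¬ Fibered M pk ((A : Set (ZMod M)) ∩ gridSet M x0 D)) :
    ExtCorner M pi pj pk (A : Set (ZMod M)) (gridSet M x0 D) ∨
    ExtCorner M pj pk pi (A : Set (ZMod M)) (gridSet M x0 D) ∨
    ExtCorner M pk pi pj (A : Set (ZMod M)) (gridSet M x0 D) := by
  have hM0 : M ≠ 0 := by
    rw [hM]
    exact mul_ne_zero (mul_ne_zero (pow_ne_zero _ hpi.ne_zero) (pow_ne_zero _ hpj.ne_zero))
      (pow_ne_zero _ hpk.ne_zero)
  have : NeZero M := ⟨hM0⟩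
  obtain ⟨a, rfl⟩ : ∃ a, ni = a + 1 := ⟨ni - 1, by omega⟩
  obtain ⟨b, rfl⟩ : ∃ b, nj = b + 1 := ⟨nj - 1, by omega⟩
  obtain ⟨c, rfl⟩ : ∃ c, nk = c + 1 := ⟨nk - 1, by omega⟩
  simp only [Nat.add_sub_cancel] at hD
  have oij : pi.Coprime pj := (Nat.coprime_primes hpi hpj).2 hij
  have oik : pi.Coprime pk := (Nat.coprime_primes hpi hpk).2 hik
  have ojk : pj.Coprime pk := (Nat.coprime_primes hpj hpk).2 hjk
  have toC : ∀ x y : ℕ, x.Coprime y → IsCoprime (x : ZMod M) (y : ZMod M) := by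
    intro x y h
    have := (Nat.isCoprime_iff_coprime.2 h).map (Int.castRingHom (ZMod M))
    simpa using this
  have cij : ∀ m n, IsCoprime ((pi ^ m : ℕ) : ZMod M) ((pj ^ n : ℕ) : ZMod M) :=
    fun m n => toC _ _ (oij.pow m n)
  have cik : ∀ m n, IsCoprime ((pi ^ m : ℕ) : ZMod M) ((pk ^ n : ℕ) : ZMod M) :=
    fun m n => toC _ _ (oik.pow m n)
  have cjk : ∀ m n, IsCoprime ((pj ^ m : ℕ) : ZMod M) ((pk ^ n : ℕ) : ZMod M) :=
    fun m n => toC _ _ (ojk.pow m n)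
  have gen : ∀ (N l m n : ℕ), N = pi ^ l * pj ^ m * pk ^ n → ∀ z : ZMod M, (N : ZMod M) ∣ z ↔
      ((pi ^ l : ℕ) : ZMod M) ∣ z ∧ ((pj ^ m : ℕ) : ZMod M) ∣ z ∧ ((pk ^ n : ℕ) : ZMod M) ∣ z := by
    rintro N l m n rfl z
    rw [Nat.cast_mul, Nat.cast_mul]
    exact mul3_dvd (cij l m) (cik l n) (cjk m n)
  have gi := gen (M / pi) a (b + 1) (c + 1) (Nat.div_eq_of_eq_mul_left hpi.pos (by rw [hM]; ring))
  have gj := gen (M / pj) (a + 1) b (c + 1) (Nat.div_eq_of_eq_mul_left hpj.pos (by rw [hM]; ring))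
  have gk := gen (M / pk) (a + 1) (b + 1) c (Nat.div_eq_of_eq_mul_left hpk.pos (by rw [hM]; ring))
  have gij := gen (M / (pi * pj)) a b (c + 1)
    (Nat.div_eq_of_eq_mul_left (Nat.mul_pos hpi.pos hpj.pos) (by rw [hM]; ring))
  have gjk := gen (M / (pj * pk)) (a + 1) b c
    (Nat.div_eq_of_eq_mul_left (Nat.mul_pos hpj.pos hpk.pos) (by rw [hM]; ring))
  have gki := gen (M / (pk * pi)) a (b + 1) c
    (Nat.div_eq_of_eq_mul_left (Nat.mul_pos hpk.pos hpi.pos) (by rw [hM]; ring))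
  have gD := gen D a b c hD
  have gM := gen M (a + 1) (b + 1) (c + 1) hM
  have hP : ((pi ^ a : ℕ) : ZMod M) ∣ ((pi ^ (a + 1) : ℕ) : ZMod M) :=
    Nat.cast_dvd_cast (pow_dvd_pow _ (Nat.le_succ a))
  have hQ : ((pj ^ b : ℕ) : ZMod M) ∣ ((pj ^ (b + 1) : ℕ) : ZMod M) :=
    Nat.cast_dvd_cast (pow_dvd_pow _ (Nat.le_succ b))
  have hR : ((pk ^ c : ℕ) : ZMod M) ∣ ((pk ^ (c + 1) : ℕ) : ZMod M) :=
    Nat.cast_dvd_cast (pow_dvd_pow _ (Nat.le_succ c))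
  have mi : M = pi ^ (a + 1) * (pj ^ (b + 1) * pk ^ (c + 1)) := by rw [hM]; ring
  have mj : M = pj ^ (b + 1) * (pi ^ (a + 1) * pk ^ (c + 1)) := by rw [hM]; ring
  have mk : M = pk ^ (c + 1) * (pi ^ (a + 1) * pj ^ (b + 1)) := by rw [hM]; ring
  have pid : pi ∣ pi ^ (a + 1) := dvd_pow_self _ (Nat.succ_ne_zero a)
  have pjd : pj ∣ pj ^ (b + 1) := dvd_pow_self _ (Nat.succ_ne_zero b)
  have pkd : pk ∣ pk ^ (c + 1) := dvd_pow_self _ (Nat.succ_ne_zero c)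
  obtain ⟨F, hF, hdis, hU⟩ := hfib
  by_cases ck : ∀ f ∈ F, ∃ x, f = gridSet M x (M / pi) ∨ f = gridSet M x (M / pj)
  · right; right
    exact two_dir pi pj pk hpk (pkd.trans ⟨_, mk⟩) _ _ _ _ _ _ hP hQ hR (cij _ _) (cik _ _) (cjk _ _)
      gi gj gk gij D gD A x0 F ck hdis hU hnfi hnfj
  by_cases ci : ∀ f ∈ F, ∃ x, f = gridSet M x (M / pj) ∨ f = gridSet M x (M / pk)
  · left
    exact two_dir pj pk pi hpi (pid.trans ⟨_, mi⟩) _ _ _ _ _ _ hQ hR hP (cjk _ _) (cij _ _).symm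
      (cik _ _).symm (fun z => (gj z).trans (by tauto)) (fun z => (gk z).trans (by tauto))
      (fun z => (gi z).trans (by tauto)) (fun z => (gjk z).trans (by tauto)) D
      (fun z => (gD z).trans (by tauto)) A x0 F ci hdis hU hnfj hnfk
  by_cases cj : ∀ f ∈ F, ∃ x, f = gridSet M x (M / pk) ∨ f = gridSet M x (M / pi)
  · right; left
    exact two_dir pk pi pj hpj (pjd.trans ⟨_, mj⟩) _ _ _ _ _ _ hR hP hQ (cik _ _).symm
      (cjk _ _).symm (cij _ _) (fun z => (gk z).trans (by tauto)) (fun z => (gi z).trans (by tauto))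
      (fun z => (gj z).trans (by tauto)) (fun z => (gki z).trans (by tauto)) D
      (fun z => (gD z).trans (by tauto)) A x0 F cj hdis hU hnfk hnfi
  exfalso
  have exk : ∃ t, gridSet M t (M / pk) ∈ F := by
    by_contra hcon
    push Not at hcon
    apply ck
    intro f hf
    obtain ⟨x, h | h | h⟩ := hF f hf
    · exact ⟨x, Or.inl h⟩
    · exact ⟨x, Or.inr h⟩
    · exact absurd (h ▸ hf) (hcon x)
  have exi : ∃ t, gridSet M t (M / pi) ∈ F := by
    by_contra hcon
    push Not at hcon
    apply ci
    intro f hf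
    obtain ⟨x, h | h | h⟩ := hF f hf
    · exact absurd (h ▸ hf) (hcon x)
    · exact ⟨x, Or.inl h⟩
    · exact ⟨x, Or.inr h⟩
  have exj : ∃ t, gridSet M t (M / pj) ∈ F := by
    by_contra hcon
    push Not at hcon
    apply cj
    intro f hf
    obtain ⟨x, h | h | h⟩ := hF f hf
    · exact ⟨x, Or.inr h⟩
    · exact absurd (h ▸ hf) (hcon x)
    · exact ⟨x, Or.inl h⟩
  obtain ⟨t, ht⟩ := exk
  obtain ⟨u, hu⟩ := exi
  obtain ⟨v, hv⟩ := exj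
  refine three_dir pi pj pk (pi ^ (a + 1)) (pi ^ a) (pj ^ (b + 1)) (pj ^ b) (pk ^ (c + 1)) (pk ^ c)
    hP hQ hR (cij _ _) (cik _ _) (cjk _ _) ?_ (prime_split hpi mi) (prime_split hpj mj)
    (prime_split hpk mk) ?_ ?_ ?_ gi gj gk D gD A B htile x0 F hF hdis hU u v t hu hv ht
  · intro z h1 h2 h3
    have := (gM z).2 ⟨h1, h2, h3⟩
    rwa [ZMod.natCast_self, zero_dvd_iff] at this
  · exact not_dvd_line hpi mi pid (Nat.Coprime.mul_right (oij.pow _ _) (oik.pow _ _))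
  · exact not_dvd_line hpj mj pjd (Nat.Coprime.mul_right (oij.symm.pow _ _) (ojk.pow _ _))
  · exact not_dvd_line hpk mk pkd (Nat.Coprime.mul_right (oik.symm.pow _ _) (ojk.symm.pow _ _))
end

section
/- Let p_i, p_j, p_k be distinct odd primes and M = p_i^2 p_j^2 p_k^2. Assume A ⊕ B = ℤ_M, |A| = |B| = p_i p_j p_k, and Φ_M | A. Let Λ be a D(M)-grid such that every divisor m of M with D(M) | m belongs to Div(A ∩ Λ), A ∩ Λ is not M-fibered in any direction, and A contains diagonal boxes on Λ: a nonempty box P ⊆ Λ with nonempty complementary box P° and P ∪ P° ⊆ A. Suppose in addition that for some ν ∈ {i,j,k} the mixed box R_ν = {x ∈ Λ : x ∼_ν q for some q ∈ P°, and for each μ ∈ {i,j,k} ∖ {ν} there is p ∈ P with x ∼_μ p} is contained in A. Then Λ ⊕ B = ℤ_M is also a tiling, and both A and B satisfy (T2). -/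
open Polynomial

/-- `P` is a box in the grid `Λ`, with respect to the equivalences `x ∼_ν y ↔ q_ν ∣ x - y`
(`q_ν = p_ν^{n_ν}`). -/
def IsBox (M qi qj qk : ℕ) (Lam P : Set (ZMod M)) : Prop :=
  P ⊆ Lam ∧ ∀ u ∈ P, ∀ v ∈ P, ∀ w ∈ P, ∀ x ∈ Lam,
    (qi : ZMod M) ∣ (x - u) → (qj : ZMod M) ∣ (x - v) → (qk : ZMod M) ∣ (x - w) → x ∈ P

/-- The complementary box `P°` of `P` in `Λ`. -/
def compBox (M qi qj qk : ℕ) (Lam P : Set (ZMod M)) : Set (ZMod M) :=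
  {x : ZMod M | x ∈ Lam ∧ ∀ u ∈ P,
    ¬ (qi : ZMod M) ∣ (x - u) ∧ ¬ (qj : ZMod M) ∣ (x - u) ∧ ¬ (qk : ZMod M) ∣ (x - u)}

/-- The mixed box `R_ν`: points of `Λ` equivalent to an element of `P°` in the direction `ν`
(`q = q_ν`) and to elements of `P` in the two remaining directions (`r₁ = q_μ₁`,
`r₂ = q_μ₂`). -/
def mixedBox (M q r1 r2 : ℕ) (Lam P Pc : Set (ZMod M)) : Set (ZMod M) :=
  {x : ZMod M | x ∈ Lam ∧ (∃ u ∈ Pc, (q : ZMod M) ∣ (x - u)) ∧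
    (∃ v ∈ P, (r1 : ZMod M) ∣ (x - v)) ∧ (∃ w ∈ P, (r2 : ZMod M) ∣ (x - w))}




/-- simple tiling -/
def Til {G : Type*} [AddCommGroup G] [Fintype G] (A B : Finset G) : Prop :=
  (∀ z : G, ∃ a ∈ A, ∃ b ∈ B, a + b = z) ∧ A.card * B.card = Fintype.card G

lemma Til.inj {G : Type*} [AddCommGroup G] [Fintype G] [DecidableEq G] {A B : Finset G}
    (h : Til A B) {a a' b b' : G} (ha : a ∈ A) (ha' : a' ∈ A) (hb : b ∈ B) (hb' : b' ∈ B)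
    (hs : a + b = a' + b') : a = a' ∧ b = b' := by
  have himg : (A ×ˢ B).image (fun x : G × G => x.1 + x.2) = Finset.univ := by
    ext z
    simp only [Finset.mem_image, Finset.mem_product, Finset.mem_univ, iff_true, Prod.exists]
    obtain ⟨a, ha, b, hb, h⟩ := h.1 z
    exact ⟨a, b, ⟨ha, hb⟩, h⟩
  have hinj : Set.InjOn (fun x : G × G => x.1 + x.2) (A ×ˢ B : Finset (G × G)) := by
    apply Finset.injOn_of_card_image_eq
    rw [himg, Finset.card_univ, Finset.card_product, h.2]
  have := hinj (x₁ := (a, b)) (x₂ := (a', b')) (by simp [ha, hb]) (by simp [ha', hb']) hs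
  simpa using this

lemma Til.prime_dilate {G : Type*} [AddCommGroup G] [Fintype G] [DecidableEq G] {A B : Finset G}
    (h : Til A B) (q : ℕ) (hq : q.Prime) (hqA : ¬ q ∣ A.card) :
    ∀ z : G, ∃ a ∈ A, ∃ b ∈ B, q • a + b = z := by
  classical
  have : Fact q.Prime := ⟨hq⟩
  have : CharP (AddMonoidAlgebra (ZMod q) G) q :=
    charP_of_injective_algebraMap (R := ZMod q) (RingHom.injective _) q
  intro z
  by_contra hcon
  push Not at hcon
  let s : G → AddMonoidAlgebra (ZMod q) G := fun g => AddMonoidAlgebra.single g 1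
  have hs : ∀ g g', s g * s g' = s (g + g') := by
    intro g g'; simp [s, AddMonoidAlgebra.single_mul_single]
  set a := ∑ x ∈ A, s x with ha
  set b := ∑ x ∈ B, s x with hb
  set t := ∑ x : G, s x with ht
  have hab : a * b = t := by
    rw [ha, hb, Finset.sum_mul_sum, ← Finset.sum_product']
    refine Finset.sum_bij (fun x _ => x.1 + x.2) (by simp) ?_ ?_ ?_
    · rintro ⟨x, y⟩ hx ⟨x', y'⟩ hx' hxy
      simp only [Finset.mem_product] at hx hx'
      have := h.inj hx.1 hx'.1 hx.2 hx'.2 hxy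
      simp [this.1, this.2]
    · intro z _
      obtain ⟨a, ha, b, hb, h⟩ := h.1 z
      exact ⟨(a, b), by simp [ha, hb], h⟩
    · intro x _; rw [hs]
  have hst : ∀ g, s g * t = t := by
    intro g
    rw [ht, Finset.mul_sum]
    simp only [hs]
    exact Fintype.sum_equiv (Equiv.addLeft g) _ _ (by simp)
  have hat : a * t = (A.card : AddMonoidAlgebra (ZMod q) G) * t := by
    rw [ha, Finset.sum_mul, Finset.sum_congr rfl (fun x _ => hst x)]; simp
  have hpow : ∀ n : ℕ, a ^ n * t = (A.card : AddMonoidAlgebra (ZMod q) G) ^ n * t := by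
    intro n
    induction n with
    | zero => simp
    | succ n ih => rw [pow_succ, mul_assoc, hat, mul_left_comm, ih]; ring
  have h1 : (A.card : AddMonoidAlgebra (ZMod q) G) ^ (q - 1) = 1 := by
    have h0 : (A.card : ZMod q) ≠ 0 := by rwa [Ne, ZMod.natCast_eq_zero_iff]
    have := ZMod.pow_card_sub_one_eq_one h0
    have := congrArg (algebraMap (ZMod q) (AddMonoidAlgebra (ZMod q) G)) this
    rwa [map_pow, map_natCast, map_one] at this
  have hq1 : q = (q - 1) + 1 := by have := hq.pos; omega
  have hfin : a ^ q * b = t := by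
    have : a ^ q = a ^ (q - 1) * a := by rw [← pow_succ, ← hq1]
    rw [this, mul_assoc, hab, hpow, h1, one_mul]
  have haq : a ^ q = ∑ x ∈ A, s (q • x) := by
    rw [ha, sum_pow_char]
    refine Finset.sum_congr rfl fun x _ => ?_
    simp [s, AddMonoidAlgebra.single_pow]
  rw [haq, hb, Finset.sum_mul_sum] at hfin
  simp only [hs] at hfin
  have h2 := congrArg (fun f => f.coeff z) hfin
  rw [ht] at h2
  simp only [AddMonoidAlgebra.coeff_sum, Finsupp.finsetSum_apply, s,
    AddMonoidAlgebra.coeff_single, Finsupp.single_apply] at h2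
  rw [Finset.sum_eq_zero (fun x hx => Finset.sum_eq_zero fun y hy => if_neg (hcon x hx y hy))] at h2
  simp at h2

lemma Til.dilate {G : Type*} [AddCommGroup G] [Fintype G] [DecidableEq G] {A B : Finset G}
    (h : Til A B) (n : ℕ) (hn : n.Coprime (Fintype.card G)) :
    ∀ z : G, ∃ a ∈ A, ∃ b ∈ B, n • a + b = z := by
  induction n using induction_on_primes generalizing A with
  | zero =>
    rw [Nat.coprime_zero_left] at hn
    have := Fintype.card_le_one_iff_subsingleton.1 hn.le
    intro z
    obtain ⟨a, ha, b, hb, -⟩ := h.1 z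
    exact ⟨a, ha, b, hb, Subsingleton.elim _ _⟩
  | one => simpa using h.1
  | prime_mul q n hq ih =>
    have hqc : q.Coprime (Fintype.card G) := Nat.Coprime.coprime_mul_right hn
    have hnc : n.Coprime (Fintype.card G) := Nat.Coprime.coprime_mul_left hn
    have hqA : ¬ q ∣ A.card := by
      intro hd
      have : q ∣ Fintype.card G := h.2 ▸ Dvd.dvd.mul_right hd _
      exact (hq.coprime_iff_not_dvd.1 hqc) this
    have h1 := h.prime_dilate q hq hqA
    have hT : Til (A.image (fun a => q • a)) B := by
      have hsurj : ∀ z : G, ∃ a ∈ A.image (fun a => q • a), ∃ b ∈ B, a + b = z := by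
        intro z
        obtain ⟨a, ha, b, hb, hz⟩ := h1 z
        exact ⟨q • a, Finset.mem_image_of_mem _ ha, b, hb, hz⟩
      refine ⟨hsurj, ?_⟩
      apply le_antisymm
      · rw [← h.2]; exact Nat.mul_le_mul_right _ Finset.card_image_le
      · rw [← Finset.card_product, ← Finset.card_univ]
        refine Finset.card_le_card_of_surjOn (fun x : G × G => x.1 + x.2) ?_
        intro z _
        obtain ⟨a, ha, b, hb, hz⟩ := hsurj z
        exact ⟨(a, b), by simpa using ⟨by simpa using ha, hb⟩, hz⟩
    intro z
    obtain ⟨a, ha, b, hb, hz⟩ := ih hT hnc z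
    obtain ⟨a', ha', rfl⟩ := Finset.mem_image.1 ha
    exact ⟨a', ha', b, hb, by rw [← hz, mul_comm, mul_smul]⟩


/-- reduction `ZMod (p^2) → ZMod p` -/
noncomputable def red (p : ℕ) : ZMod (p ^ 2) →+* ZMod p :=
  ZMod.castHom (dvd_pow_self p two_ne_zero) (ZMod p)

lemma red_natCast (p n : ℕ) : red p (n : ZMod (p ^ 2)) = (n : ZMod p) := map_natCast _ _

lemma red_eq_zero {p : ℕ} (hp : p.Prime) (x : ZMod (p ^ 2)) (h : red p x = 0) :
    ∃ k : ℕ, x = (p : ZMod (p ^ 2)) * k := by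
  have : NeZero (p ^ 2) := ⟨pow_ne_zero _ hp.ne_zero⟩
  obtain ⟨n, rfl⟩ := ZMod.natCast_zmod_surjective x
  rw [red_natCast, ZMod.natCast_eq_zero_iff] at h
  obtain ⟨k, rfl⟩ := h
  exact ⟨k, by push_cast; ring⟩

lemma red_ne_zero {p : ℕ} (hp : p.Prime) (x : ZMod (p ^ 2)) (h : red p x ≠ 0) : IsUnit x := by
  have : NeZero (p ^ 2) := ⟨pow_ne_zero _ hp.ne_zero⟩
  obtain ⟨n, rfl⟩ := ZMod.natCast_zmod_surjective x
  rw [red_natCast, Ne, ZMod.natCast_eq_zero_iff] at h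
  rw [ZMod.isUnit_iff_coprime]
  exact Nat.Coprime.pow_right _ ((Nat.Prime.coprime_iff_not_dvd hp).2 h).symm

lemma red_mul_zero {p : ℕ} (hp : p.Prime) (x : ZMod (p ^ 2)) (h : red p x = 0) :
    (p : ZMod (p ^ 2)) * x = 0 := by
  obtain ⟨k, rfl⟩ := red_eq_zero hp x h
  have : ((p ^ 2 : ℕ) : ZMod (p ^ 2)) = 0 := ZMod.natCast_self _
  push_cast at this
  rw [← mul_assoc, ← sq, this, zero_mul]

lemma assoc_ppow {p : ℕ} (hp : p.Prime) (x y : ZMod (p ^ 2)) (h0 : x = 0 ↔ y = 0)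
    (h1 : red p x = 0 ↔ red p y = 0) : ∃ r, IsUnit r ∧ y = r * x := by
  by_cases hx : red p x = 0
  · by_cases hx0 : x = 0
    · exact ⟨1, isUnit_one, by rw [h0.1 hx0, hx0]; simp⟩
    have hy0 : y ≠ 0 := fun h => hx0 (h0.2 h)
    obtain ⟨k, rfl⟩ := red_eq_zero hp x hx
    obtain ⟨m, rfl⟩ := red_eq_zero hp y (h1.1 hx)
    have key : ∀ k : ℕ, (p : ZMod (p ^ 2)) * k ≠ 0 → IsUnit (k : ZMod (p ^ 2)) := by
      intro k hk
      apply red_ne_zero hp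
      intro h
      exact hk (red_mul_zero hp _ h)
    obtain ⟨u, hu⟩ := key k hx0
    obtain ⟨v, hv⟩ := key m hy0
    refine ⟨(v * u⁻¹ : (ZMod (p ^ 2))ˣ), Units.isUnit _, ?_⟩
    rw [← hu, ← hv]
    push_cast
    rw [show (v : ZMod (p ^ 2)) * ((u⁻¹ : (ZMod (p ^ 2))ˣ) : ZMod (p ^ 2)) * (p * u)
      = p * v * (((u⁻¹ : (ZMod (p ^ 2))ˣ) : ZMod (p ^ 2)) * u) by ring, Units.inv_mul, mul_one]
  · obtain ⟨u, rfl⟩ := red_ne_zero hp x hx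
    obtain ⟨v, rfl⟩ := red_ne_zero hp y (fun h => hx (h1.2 h))
    exact ⟨(v * u⁻¹ : (ZMod (p ^ 2))ˣ), Units.isUnit _, by simp⟩

section core

variable {M : ℕ} {p : Fin 3 → ℕ}

/-- coordinate system -/
abbrev Crd (M : ℕ) (p : Fin 3 → ℕ) := ZMod M ≃+* (∀ m : Fin 3, ZMod (p m ^ 2))

/-- coordinates modulo `p m` -/
noncomputable def bt (e : Crd M p) (m : Fin 3) (x : ZMod M) : ZMod (p m) := red (p m) (e x m)

lemma bt_add (e : Crd M p) (m : Fin 3) (x y : ZMod M) : bt e m (x + y) = bt e m x + bt e m y := by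
  simp [bt]

lemma bt_sub (e : Crd M p) (m : Fin 3) (x y : ZMod M) : bt e m (x - y) = bt e m x - bt e m y := by
  simp [bt]

lemma e_add (e : Crd M p) (m : Fin 3) (x y : ZMod M) : e (x + y) m = e x m + e y m := by
  simp

lemma e_sub (e : Crd M p) (m : Fin 3) (x y : ZMod M) : e (x - y) m = e x m - e y m := by
  simp

lemma bt_of_e (e : Crd M p) {m : Fin 3} {x y : ZMod M} (h : e x m = e y m) :
    bt e m x = bt e m y := by simp [bt, h]

lemma e_ext (e : Crd M p) {x y : ZMod M} (h : ∀ m, e x m = e y m) : x = y :=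
  e.injective (funext h)

/-- same divisor type -/
def ty (e : Crd M p) (u v : ZMod M) : Prop :=
  ∀ m, (e u m = 0 ↔ e v m = 0) ∧ (bt e m u = 0 ↔ bt e m v = 0)

lemma ty.symm {e : Crd M p} {u v : ZMod M} (h : ty e u v) : ty e v u :=
  fun m => ⟨(h m).1.symm, (h m).2.symm⟩

lemma ty.trans {e : Crd M p} {u v w : ZMod M} (h : ty e u v) (h' : ty e v w) : ty e u w :=
  fun m => ⟨(h m).1.trans (h' m).1, (h m).2.trans (h' m).2⟩

lemma ty_unit {e : Crd M p} (hp : ∀ m, (p m).Prime) {u v : ZMod M} (h : ty e u v) :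
    ∃ r, IsUnit r ∧ v = r * u := by
  choose r hr hrr using fun m => assoc_ppow (hp m) (e u m) (e v m) (h m).1 (h m).2
  refine ⟨e.symm r, ?_, ?_⟩
  · apply IsUnit.map e.symm
    exact Pi.isUnit_iff.2 hr
  · apply e.injective
    rw [map_mul, e.apply_symm_apply]
    funext m
    exact hrr m

lemma ty_of_unit {e : Crd M p} {r u : ZMod M} (hr : IsUnit r) : ty e u (r * u) := by
  intro m
  have h1 : IsUnit (e r m) := by
    have := hr.map e
    exact Pi.isUnit_iff.1 this m
  have h2 : IsUnit (red (p m) (e r m)) := h1.map _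
  constructor
  · rw [map_mul, Pi.mul_apply, h1.mul_right_eq_zero]
  · rw [bt, bt, map_mul, Pi.mul_apply, map_mul, h2.mul_right_eq_zero]

/-- the working hypotheses on a pair `(A, B)` -/
structure Ctx (e : Crd M p) (A B : Finset (ZMod M)) : Prop where
  til : ∀ r, IsUnit r → ∀ z, ∃ a ∈ A, ∃ b ∈ B, r * a + b = z
  sands : ∀ a ∈ A, ∀ a' ∈ A, ∀ b ∈ B, ∀ b' ∈ B, ty e (a - a') (b - b') → a = a'
  bD : ∀ b ∈ B, ∀ b' ∈ B, (∀ m, bt e m b = bt e m b') → b = b'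
  bS : ∀ z, ∃ b ∈ B, ∀ m, bt e m b = bt e m z

lemma til_unit [NeZero M] {A B : Finset (ZMod M)} (h : Til A B) {r : ZMod M} (hr : IsUnit r)
    (z : ZMod M) : ∃ a ∈ A, ∃ b ∈ B, r * a + b = z := by
  obtain ⟨n, rfl⟩ := ZMod.natCast_zmod_surjective r
  rw [ZMod.isUnit_iff_coprime] at hr
  have := h.dilate n (by rwa [ZMod.card]) z
  simpa using this

lemma til_sands [NeZero M] {e : Crd M p} (hp : ∀ m, (p m).Prime) {A B : Finset (ZMod M)}
    (h : Til A B) :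
    ∀ a ∈ A, ∀ a' ∈ A, ∀ b ∈ B, ∀ b' ∈ B, ty e (a - a') (b - b') → a = a' := by
  intro a ha a' ha' b hb b' hb' ht
  obtain ⟨r, hr, hrr⟩ := ty_unit hp ht
  have hinj : Function.Injective (fun x : ZMod M => r * x) := hr.mul_right_injective
  have hT : Til (A.image (fun x => r * x)) B := by
    refine ⟨?_, ?_⟩
    · intro z
      obtain ⟨a, ha, b, hb, hz⟩ := til_unit h hr z
      exact ⟨r * a, Finset.mem_image_of_mem _ ha, b, hb, hz⟩
    · rw [Finset.card_image_of_injective _ hinj, h.2]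
  have := hT.inj (a := r * a) (a' := r * a') (b := b') (b' := b)
    (Finset.mem_image_of_mem _ ha) (Finset.mem_image_of_mem _ ha') hb' hb
    (by linear_combination -hrr)
  exact hinj this.1

lemma e_surj (e : Crd M p) (f : Fin 3 → ZMod M) : ∃ y, ∀ m, e y m = e (f m) m :=
  ⟨e.symm (fun m => e (f m) m), fun m => by rw [e.apply_symm_apply]⟩

lemma red_surj (p : ℕ) : Function.Surjective (red p) := ZMod.castHom_surjective _

lemma bt_surj (e : Crd M p) (f : ∀ m, ZMod (p m)) : ∃ y, ∀ m, bt e m y = f m := by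
  choose g hg using fun m => red_surj (p m) (f m)
  exact ⟨e.symm g, fun m => by rw [bt, e.apply_symm_apply, hg]⟩

lemma bS_of_bD (e : Crd M p) (hp : ∀ m, (p m).Prime) {B : Finset (ZMod M)}
    (hB : B.card = ∏ m, p m)
    (bD : ∀ b ∈ B, ∀ b' ∈ B, (∀ m, bt e m b = bt e m b') → b = b') :
    ∀ z, ∃ b ∈ B, ∀ m, bt e m b = bt e m z := by
  classical
  have : ∀ m, NeZero (p m) := fun m => ⟨(hp m).ne_zero⟩
  intro z
  have hinj : Set.InjOn (fun b => (fun m => bt e m b : ∀ m, ZMod (p m))) (B : Set (ZMod M)) := by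
    intro b hb b' hb' h
    exact bD b hb b' hb' (fun m => congrFun h m)
  have hc := Finset.card_image_of_injOn hinj
  have hu : B.image (fun b => (fun m => bt e m b : ∀ m, ZMod (p m))) = Finset.univ := by
    rw [← Finset.card_eq_iff_eq_univ, hc, hB, Fintype.card_pi]
    simp [ZMod.card]
  have : (fun m => bt e m z : ∀ m, ZMod (p m)) ∈
    B.image (fun b => (fun m => bt e m b : ∀ m, ZMod (p m))) := by rw [hu]; simp
  obtain ⟨b, hb, h⟩ := Finset.mem_image.1 this
  exact ⟨b, hb, fun m => congrFun h m⟩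

lemma mkCtx [NeZero M] (e : Crd M p) (hp : ∀ m, (p m).Prime) {A B : Finset (ZMod M)}
    (h : Til A B) (hB : B.card = ∏ m, p m)
    (bD : ∀ b ∈ B, ∀ b' ∈ B, (∀ m, bt e m b = bt e m b') → b = b') : Ctx e A B :=
  ⟨fun _ hr => til_unit h hr, til_sands hp h, bD, bS_of_bD e hp hB bD⟩

end core


section core
variable {M : ℕ} {p : Fin 3 → ℕ}

lemma cast_coprime_zero {n a b : ℕ} (hab : a.Coprime b) (x : ZMod n) (ha : (a : ZMod n) * x = 0)
    (hb : (b : ZMod n) * x = 0) : x = 0 := by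
  have h := Nat.isCoprime_iff_coprime.2 hab
  obtain ⟨u, v, huv⟩ := h
  have h2 := congrArg (Int.cast : ℤ → ZMod n) huv
  push_cast at h2
  calc x = 1 * x := (one_mul x).symm
    _ = (u * a + v * b) * x := by rw [h2]
    _ = u * (a * x) + v * (b * x) := by ring
    _ = 0 := by rw [ha, hb]; ring

lemma class_card {e : Crd M p} (hp : ∀ m, (p m).Prime) {A B : Finset (ZMod M)} (C : Ctx e A B)
    {l μ ν : Fin 3} (hcov : ∀ m, m = l ∨ m = μ ∨ m = ν) (hlμ : l ≠ μ) (hlν : l ≠ ν)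
    (c : ZMod M) [DecidableEq (ZMod M)] [DecidablePred fun b : ZMod M => bt e μ b = bt e μ c ∧ bt e ν b = bt e ν c] :
    (B.filter (fun b => bt e μ b = bt e μ c ∧ bt e ν b = bt e ν c)).card = p l := by
  classical
  have : ∀ m, NeZero (p m) := fun m => ⟨(hp m).ne_zero⟩
  rw [← ZMod.card (p l), ← Finset.card_univ]
  refine Finset.card_bij (fun b _ => bt e l b) (by simp) ?_ ?_
  · intro b hb b' hb' h
    simp only [Finset.mem_filter] at hb hb'
    refine C.bD b hb.1 b' hb'.1 ?_
    intro m
    rcases hcov m with rfl | rfl | rfl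
    · exact h
    · rw [hb.2.1, hb'.2.1]
    · rw [hb.2.2, hb'.2.2]
  · intro t _
    obtain ⟨y, hy⟩ := bt_surj e (Function.update (fun m => bt e m c) l t)
    obtain ⟨b, hb, hby⟩ := C.bS y
    refine ⟨b, ?_, ?_⟩
    · simp only [Finset.mem_filter]
      refine ⟨hb, ?_, ?_⟩
      · rw [hby, hy, Function.update_of_ne hlμ.symm]
      · rw [hby, hy, Function.update_of_ne hlν.symm]
    · rw [hby, hy, Function.update_self]

lemma pure_lemma {e : Crd M p} (hp : ∀ m, (p m).Prime) (hpi : Function.Injective p)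
    {A B : Finset (ZMod M)} (C : Ctx e A B)
    {l μ ν : Fin 3} (hcov : ∀ m, m = l ∨ m = μ ∨ m = ν) (hlμ : l ≠ μ) (hlν : l ≠ ν)
    (hinjB : ∀ b ∈ B, ∀ b' ∈ B, e b μ = e b' μ → e b ν = e b' ν → b = b')
    (w : ZMod M) (hw1 : bt e μ w = 0) (hw2 : bt e ν w = 0)
    (hw : ∀ b ∈ B, ∃ b' ∈ B, e b' μ = e b μ + e w μ ∧ e b' ν = e b ν + e w ν) :
    e w μ = 0 ∧ e w ν = 0 := by
  classical
  obtain ⟨b0, hb0, -⟩ := C.bS 0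
  set E := B.filter (fun b => bt e μ b = bt e μ b0 ∧ bt e ν b = bt e ν b0) with hE
  have hcard : E.card = p l := class_card hp C hcov hlμ hlν b0
  have hstep : ∀ b : ZMod M, ∃ b', b ∈ E → b' ∈ E ∧ e b' μ = e b μ + e w μ ∧ e b' ν = e b ν + e w ν := by
    intro b
    by_cases hb : b ∈ E
    · simp only [hE, Finset.mem_filter] at hb
      obtain ⟨b', hb', h1, h2⟩ := hw b hb.1
      refine ⟨b', fun _ => ⟨?_, h1, h2⟩⟩
      simp only [hE, Finset.mem_filter]
      refine ⟨hb', ?_, ?_⟩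
      · rw [← hb.2.1, bt, h1, map_add]
        change _ + bt e μ w = _
        rw [hw1, add_zero]; rfl
      · rw [← hb.2.2, bt, h2, map_add]
        change _ + bt e ν w = _
        rw [hw2, add_zero]; rfl
    · exact ⟨0, fun h => absurd h hb⟩
  choose σ hσ using hstep
  have hinj : Set.InjOn σ (E : Set (ZMod M)) := by
    intro b hb b' hb' h
    have h1 := hσ b hb
    have h2 := hσ b' hb'
    rw [h] at h1
    have hbB := (Finset.mem_filter.1 hb).1
    have hbB' := (Finset.mem_filter.1 hb').1
    exact hinjB b hbB b' hbB' (add_right_cancel (h1.2.1.symm.trans h2.2.1))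
      (add_right_cancel (h1.2.2.symm.trans h2.2.2))
  have himg : E.image σ = E := by
    apply Finset.eq_of_subset_of_card_le
    · intro y hy
      obtain ⟨b, hb, rfl⟩ := Finset.mem_image.1 hy
      exact (hσ b hb).1
    · rw [Finset.card_image_of_injOn hinj]
  have key : ∀ m, (∀ b ∈ E, e (σ b) m = e b m + e w m) → l ≠ m → bt e m w = 0 → e w m = 0 := by
    intro m hm hlm hwm
    have hs : ∑ b ∈ E, e b m = ∑ b ∈ E, e (σ b) m := by
      conv_lhs => rw [← himg]
      rw [Finset.sum_image hinj]
    rw [Finset.sum_congr rfl hm, Finset.sum_add_distrib, Finset.sum_const, hcard] at hs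
    have h0 : (p l : ZMod (p m ^ 2)) * e w m = 0 := by
      have := left_eq_add.1 hs
      simpa using this
    exact cast_coprime_zero ((Nat.coprime_primes (hp l) (hp m)).2 (fun h => hlm (hpi h))) _ h0
      (red_mul_zero (hp m) _ hwm)
  exact ⟨key μ (fun b hb => (hσ b hb).2.1) hlμ hw1, key ν (fun b hb => (hσ b hb).2.2) hlν hw2⟩

/-- coordinate-wise criterion for the same type -/
lemma ty_mk {e : Crd M p} {u v : ZMod M}
    (h : ∀ m, (e u m = 0 ∧ e v m = 0) ∨ (bt e m u ≠ 0 ∧ bt e m v ≠ 0) ∨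
      (e u m ≠ 0 ∧ e v m ≠ 0 ∧ bt e m u = 0 ∧ bt e m v = 0)) : ty e u v := by
  have h0 : ∀ m x, e x m = 0 → bt e m x = 0 := by
    intro m x hx; rw [bt, hx, map_zero]
  intro m
  have := h0 m u
  have := h0 m v
  have := h m
  tauto

/-- same for differences -/
lemma ty_mk' {e : Crd M p} {u v u' v' : ZMod M}
    (h : ∀ m, (e u m = e v m ∧ e u' m = e v' m) ∨ (bt e m u ≠ bt e m v ∧ bt e m u' ≠ bt e m v') ∨
      (e u m ≠ e v m ∧ e u' m ≠ e v' m ∧ bt e m u = bt e m v ∧ bt e m u' = bt e m v')) :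
    ty e (u - v) (u' - v') := by
  apply ty_mk
  simpa only [e_sub, bt_sub, sub_eq_zero, sub_ne_zero] using h

/-- a conflict for `x` -/
def Cf (e : Crd M p) (A B : Finset (ZMod M)) (x z : ZMod M) : Prop :=
  z ∈ A ∧ ∃ b ∈ B, ∃ b' ∈ B, ty e (z - x) (b - b')

lemma Cf.dir {e : Crd M p} {A B : Finset (ZMod M)} (C : Ctx e A B) {x z : ZMod M} (hx : x ∉ A)
    (h : Cf e A B x z) : ∃ m, bt e m z ≠ bt e m x := by
  by_contra hcon
  push Not at hcon
  obtain ⟨hz, b, hb, b', hb', ht⟩ := h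
  have hbb : b = b' := by
    refine C.bD b hb b' hb' fun m => ?_
    have := (ht m).2.1 (by rw [bt_sub, hcon m, sub_self])
    rwa [bt_sub, sub_eq_zero] at this
  have : z = x := by
    apply e_ext e
    intro m
    have := (ht m).1.2 (by rw [hbb, sub_self]; simp)
    rwa [e_sub, sub_eq_zero] at this
  exact hx (this ▸ hz)

lemma Cf.no {e : Crd M p} {A B : Finset (ZMod M)} (C : Ctx e A B) {x z : ZMod M}
    (h : Cf e A B x z) {w a : ZMod M} (hw : w ∈ A) (ha : a ∈ A) (ht : ty e (w - a) (z - x)) :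
    w = a := by
  obtain ⟨hz, b, hb, b', hb', ht'⟩ := h
  exact C.sands w hw a ha b hb b' hb' (ht.trans ht')

/-- elements of `A` in the grid of `x` -/
def InS (e : Crd M p) (A : Finset (ZMod M)) (x a : ZMod M) : Prop :=
  a ∈ A ∧ ∀ m, bt e m a = bt e m x

/-- if `A` meets the `m₀`-line of `x` in the grid then no conflict is in direction `m₀` -/
lemma Cf.not_dir {e : Crd M p} {A B : Finset (ZMod M)} (C : Ctx e A B) {x z : ZMod M}
    (h : Cf e A B x z) {m₀ : Fin 3} {a : ZMod M} (ha : InS e A x a)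
    (hag : ∀ m, m ≠ m₀ → e a m = e x m) : bt e m₀ z = bt e m₀ x := by
  by_contra hne
  have : z = a := by
    refine h.no C h.1 ha.1 (ty_mk' fun m => ?_)
    by_cases hm : m = m₀
    · subst hm
      right; left
      exact ⟨by rwa [ha.2], hne⟩
    · have hm' := hag m hm
      by_cases h1 : e z m = e x m
      · left; exact ⟨by rw [hm', h1], h1⟩
      · by_cases h2 : bt e m z = bt e m x
        · right; right; exact ⟨by rwa [hm'], h1, by rwa [ha.2], h2⟩
        · right; left; exact ⟨by rwa [ha.2], h2⟩
  exact hne (this ▸ ha.2 m₀)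

lemma Cf.xor {e : Crd M p} {A B : Finset (ZMod M)} (C : Ctx e A B) {x z : ZMod M}
    (h : Cf e A B x z) {l μ ν : Fin 3} (hcov : ∀ m, m = l ∨ m = μ ∨ m = ν)
    (hl : bt e l z ≠ bt e l x) {a : ZMod M} (ha : InS e A x a)
    (hag : e a μ = e x μ) : (e z ν = e x ν ∧ e z ν ≠ e a ν) ∨ (e z ν ≠ e x ν ∧ e z ν = e a ν) := by
  by_contra hcon
  have hiff : e z ν = e x ν ↔ e z ν = e a ν := by tauto
  have : z = a := by
    refine h.no C h.1 ha.1 (ty_mk' fun m => ?_)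
    have hb := ha.2 m
    rcases hcov m with rfl | rfl | rfl
    · right; left
      exact ⟨by rwa [ha.2], hl⟩
    · rw [hag, hb]; tauto
    · rw [hb]; tauto
  exact hl (this ▸ ha.2 l)

end core


section core
variable {M : ℕ} {p : Fin 3 → ℕ}

lemma Cf.of_eq {e : Crd M p} {A B : Finset (ZMod M)} {x b z b' : ZMod M} (hz : z ∈ A)
    (hb : b ∈ B) (hb' : b' ∈ B) (h : z + b' = x + b) : Cf e A B x z := by
  refine ⟨hz, b, hb, b', hb', ?_⟩
  rw [show z - x = b - b' by linear_combination h]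
  exact fun m => ⟨Iff.rfl, Iff.rfl⟩

lemma Cf.excl {e : Crd M p} {A B : Finset (ZMod M)} (C : Ctx e A B) {x z z' a : ZMod M}
    {l μ ν : Fin 3} (hcov : ∀ m, m = l ∨ m = μ ∨ m = ν)
    (h : Cf e A B x z) (h' : Cf e A B x z') (ha : InS e A x a)
    (hl : bt e l z ≠ bt e l x) (hl' : bt e l z' ≠ bt e l x)
    (bμ : bt e μ z = bt e μ x) (bν : bt e ν z = bt e ν x)
    (bμ' : bt e μ z' = bt e μ x) (bν' : bt e ν z' = bt e ν x)
    (h1 : e z' μ = e a μ ↔ e z μ = e x μ) (h2 : e z' ν = e a ν ↔ e z ν = e x ν) : False := by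
  have : z' = a := by
    refine h.no C h'.1 ha.1 (ty_mk' fun m => ?_)
    have hb := ha.2 m
    rcases hcov m with rfl | rfl | rfl
    · right; left
      exact ⟨by rwa [ha.2], hl⟩
    · rw [hb]; tauto
    · rw [hb]; tauto
  exact hl' (this ▸ ha.2 l)

lemma bool3 {X U X' U' Y V Y' V' : Prop} (m1 : (X ∧ ¬U) ∨ (¬X ∧ U)) (m2 : (X' ∧ ¬U') ∨ (¬X' ∧ U'))
    (n1 : (Y ∧ ¬V) ∨ (¬Y ∧ V)) (n2 : (Y' ∧ ¬V') ∨ (¬Y' ∧ V'))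
    (E1 : (X' ↔ X) → (V' ↔ Y) → False) (E2 : (U' ↔ X) → (Y' ↔ Y) → False)
    (E3 : (U' ↔ X) → (V' ↔ Y) → False) : (X ↔ X') ∧ (Y ↔ Y') := by
  by_cases X <;> by_cases X' <;> by_cases Y <;> by_cases Y' <;> simp_all

lemma bool2 {Y V Y' V' : Prop}
    (n1 : (Y ∧ ¬V) ∨ (¬Y ∧ V)) (n2 : (Y' ∧ ¬V') ∨ (¬Y' ∧ V'))
    (E1 : (V' ↔ Y) → False) : (Y ↔ Y') := by
  by_cases Y <;> by_cases Y' <;> simp_all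

lemma xorR {X U : Prop} (h : (X ∧ ¬U) ∨ (¬X ∧ U)) (hX : ¬X) : U :=
  h.elim (fun q => absurd q.1 hX) (fun q => q.2)

lemma dir_lemma {e : Crd M p} (hp : ∀ m, (p m).Prime) (hpi : Function.Injective p)
    {A B : Finset (ZMod M)} (C : Ctx e A B)
    {l μ ν : Fin 3} (hcov : ∀ m, m = l ∨ m = μ ∨ m = ν) (hlμ : l ≠ μ) (hlν : l ≠ ν)
    {x : ZMod M} (hx : x ∉ A)
    (hfull : ∀ m, m ≠ l → ∃ a, InS e A x a ∧ ∀ m', m' ≠ m → e a m' = e x m')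
    {a1 a2 : ZMod M} (ha1 : InS e A x a1) (ha2 : InS e A x a2)
    (h1 : e a1 μ = e x μ) (h2 : e a2 ν = e x ν)
    (h3 : (∃ a3, InS e A x a3 ∧ e a3 μ = e a2 μ ∧ e a3 ν = e a1 ν) ∨
      (∃ a2', InS e A x a2' ∧ e a2' ν = e x ν ∧ e a2' μ ≠ e a2 μ)) :
    ∀ z, Cf e A B x z → bt e l z ≠ bt e l x ∧ ∀ m, m ≠ l → e z m = e x m := by
  have hdl : ∀ z, Cf e A B x z → bt e l z ≠ bt e l x := by
    intro z hz
    obtain ⟨m, hm⟩ := hz.dir C hx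
    by_cases hml : m = l
    · exact hml ▸ hm
    · obtain ⟨a, ha, hag⟩ := hfull m hml
      exact absurd (hz.not_dir C ha hag) hm
  have hν : ∀ z, Cf e A B x z →
      (e z ν = e x ν ∧ e z ν ≠ e a1 ν) ∨ (e z ν ≠ e x ν ∧ e z ν = e a1 ν) :=
    fun z hz => hz.xor C hcov (hdl z hz) ha1 h1
  have hcov' : ∀ m, m = l ∨ m = ν ∨ m = μ := fun m => by have := hcov m; tauto
  have hμ : ∀ z, Cf e A B x z →
      (e z μ = e x μ ∧ e z μ ≠ e a2 μ) ∨ (e z μ ≠ e x μ ∧ e z μ = e a2 μ) :=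
    fun z hz => hz.xor C hcov' (hdl z hz) ha2 h2
  have bμ : ∀ z, Cf e A B x z → bt e μ z = bt e μ x := by
    intro z hz
    rcases hμ z hz with h | h
    · exact bt_of_e e h.1
    · rw [bt_of_e e h.2, ha2.2]
  have bν : ∀ z, Cf e A B x z → bt e ν z = bt e ν x := by
    intro z hz
    rcases hν z hz with h | h
    · exact bt_of_e e h.1
    · rw [bt_of_e e h.2, ha1.2]
  have hsame : ∀ z z', Cf e A B x z → Cf e A B x z' →
      (e z μ = e x μ ↔ e z' μ = e x μ) ∧ (e z ν = e x ν ↔ e z' ν = e x ν) := by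
    intro z z' hz hz'
    have E := fun (a : ZMod M) (ha : InS e A x a) =>
      Cf.excl C hcov hz hz' ha (hdl z hz) (hdl z' hz') (bμ z hz) (bν z hz) (bμ z' hz') (bν z' hz')
    have E1 := E a1 ha1
    have E2 := E a2 ha2
    rw [h1] at E1
    rw [h2] at E2
    have m1 := hμ z hz
    have m2 := hμ z' hz'
    have n1 := hν z hz
    have n2 := hν z' hz'
    rcases h3 with ⟨a3, ha3, h31, h32⟩ | ⟨a2', ha2', h21, h22⟩
    · have E3 := E a3 ha3
      rw [h31, h32] at E3
      exact bool3 m1 m2 n1 n2 E1 E2 E3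
    · have hX : ∀ z, Cf e A B x z → e z μ = e x μ := by
        intro z hz
        by_contra hne
        have q1 := hμ z hz
        have q2 := hz.xor C hcov' (hdl z hz) ha2' h21
        have q1' : e z μ = e a2 μ := xorR q1 hne
        have q2' : e z μ = e a2' μ := xorR q2 hne
        exact h22 (q2'.symm.trans q1')
      have X := hX z hz
      have X' := hX z' hz'
      exact ⟨by simp [X, X'], bool2 n1 n2 (E1 (by simp [X, X']))⟩
  have hex : ∀ b ∈ B, ∃ z, Cf e A B x z ∧ ∃ b' ∈ B, z + b' = x + b := by
    intro b hb
    obtain ⟨z, hz, b', hb', h⟩ := C.til 1 isUnit_one (x + b)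
    rw [one_mul] at h
    exact ⟨z, Cf.of_eq hz hb hb' h, b', hb', h⟩
  intro z0 hz0
  refine ⟨hdl z0 hz0, ?_⟩
  suffices hs : e z0 μ = e x μ ∧ e z0 ν = e x ν by
    intro m hm
    rcases hcov m with rfl | rfl | rfl
    · exact absurd rfl hm
    · exact hs.1
    · exact hs.2
  by_contra hcon
  have hline : ∃ a, InS e A x a ∧ e a μ = e z0 μ ∧ e a ν = e z0 ν := by
    have m1 := hμ z0 hz0
    have n1 := hν z0 hz0
    by_cases X : e z0 μ = e x μ
    · have Y : e z0 ν ≠ e x ν := fun h => hcon ⟨X, h⟩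
      exact ⟨a1, ha1, by rw [h1, X], (xorR n1 Y).symm⟩
    · have X2 : e z0 μ = e a2 μ := xorR m1 X
      by_cases Y : e z0 ν = e x ν
      · exact ⟨a2, ha2, X2.symm, by rw [h2, Y]⟩
      · rcases h3 with ⟨a3, ha3, h31, h32⟩ | ⟨a2', ha2', h21, h22⟩
        · exact ⟨a3, ha3, by rw [h31, X2], by rw [h32]; exact (xorR n1 Y).symm⟩
        · exfalso
          have q2 := hz0.xor C hcov' (hdl z0 hz0) ha2' h21
          have q2' : e z0 μ = e a2' μ := xorR q2 X
          exact h22 (q2'.symm.trans X2)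
  obtain ⟨a, ha, haμ, haν⟩ := hline
  have hinjB : ∀ b ∈ B, ∀ b' ∈ B, e b μ = e b' μ → e b ν = e b' ν → b = b' := by
    intro b hb b' hb' q1 q2
    by_contra hne
    have hbl : bt e l b ≠ bt e l b' := by
      intro hbl
      apply hne
      refine C.bD b hb b' hb' fun m => ?_
      rcases hcov m with rfl | rfl | rfl
      · exact hbl
      · exact bt_of_e e q1
      · exact bt_of_e e q2
    have : z0 = a := by
      refine C.sands z0 hz0.1 a ha.1 b hb b' hb' (ty_mk' fun m => ?_)
      rcases hcov m with rfl | rfl | rfl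
      · right; left
        exact ⟨by rw [ha.2]; exact hdl z0 hz0, hbl⟩
      · left; exact ⟨haμ.symm, q1⟩
      · left; exact ⟨haν.symm, q2⟩
    exact hdl z0 hz0 (this ▸ ha.2 l)
  have := pure_lemma hp hpi C hcov hlμ hlν hinjB (x - z0)
    (by rw [bt_sub, bμ z0 hz0, sub_self]) (by rw [bt_sub, bν z0 hz0, sub_self]) (by
      intro b hb
      obtain ⟨z, hz, b', hb', h⟩ := hex b hb
      have hs := hsame z z0 hz hz0
      have m1 := hμ z hz
      have n1 := hν z hz
      have m2 := hμ z0 hz0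
      have n2 := hν z0 hz0
      have q1 : e z μ = e z0 μ := by
        by_cases X : e z μ = e x μ
        · rw [X, hs.1.1 X]
        · exact (xorR m1 X).trans (xorR m2 (fun h => X (hs.1.2 h))).symm
      have q2 : e z ν = e z0 ν := by
        by_cases X : e z ν = e x ν
        · rw [X, hs.2.1 X]
        · exact (xorR n1 X).trans (xorR n2 (fun h => X (hs.2.2 h))).symm
      have hb'' : b' = b + x - z := by linear_combination h
      refine ⟨b', hb', ?_, ?_⟩
      · rw [hb'', e_sub, e_add, e_sub, q1]; ring
      · rw [hb'', e_sub, e_add, e_sub, q2]; ring)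
  simp only [e_sub, sub_eq_zero] at this
  exact hcon ⟨this.1.symm, this.2.symm⟩

end core


section core
variable {M : ℕ} {p : Fin 3 → ℕ}

open Classical in
/-- fiber of `x` in direction `l` -/
noncomputable def fib [NeZero M] (e : Crd M p) (l : Fin 3) (x : ZMod M) : Finset (ZMod M) :=
  Finset.univ.filter (fun y => (∀ m, m ≠ l → e y m = e x m) ∧ bt e l y = bt e l x)

lemma mem_fib [NeZero M] {e : Crd M p} {l : Fin 3} {x y : ZMod M} :
    y ∈ fib e l x ↔ (∀ m, m ≠ l → e y m = e x m) ∧ bt e l y = bt e l x := by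
  simp [fib]

lemma fib_add [NeZero M] {e : Crd M p} {l : Fin 3} {x y w : ZMod M} (h : y ∈ fib e l x) :
    y + w ∈ fib e l (x + w) := by
  rw [mem_fib] at h ⊢
  refine ⟨fun m hm => ?_, ?_⟩
  · rw [e_add, e_add, h.1 m hm]
  · rw [bt_add, bt_add, h.2]

lemma fib_eq [NeZero M] {e : Crd M p} {l : Fin 3} {x y : ZMod M} (h : y ∈ fib e l x) :
    fib e l y = fib e l x := by
  rw [mem_fib] at h
  ext z
  rw [mem_fib, mem_fib, h.2]
  constructor
  · rintro ⟨h1, h2⟩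
    exact ⟨fun m hm => (h1 m hm).trans (h.1 m hm), h2⟩
  · rintro ⟨h1, h2⟩
    exact ⟨fun m hm => (h1 m hm).trans (h.1 m hm).symm, h2⟩

lemma fib_image [NeZero M] [DecidableEq (ZMod M)] (e : Crd M p) (l : Fin 3) (x w : ZMod M) :
    fib e l (x + w) = (fib e l x).image (fun y => y + w) := by
  ext z
  rw [Finset.mem_image]
  constructor
  · intro h
    refine ⟨z - w, ?_, by ring⟩
    have := fib_add (w := -w) h
    simpa [sub_eq_add_neg] using this
  · rintro ⟨y, hy, rfl⟩
    exact fib_add hy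

/-- admissible characters in direction `l` -/
def Adm (e : Crd M p) (ψ : AddChar (ZMod M) ℂ) (l : Fin 3) : Prop :=
  (∀ f, (∀ m, m ≠ l → e f m = 0) → ψ f = 1) ∨
    (∃ f, (∀ m, m ≠ l → e f m = 0) ∧ bt e l f = 0 ∧ ψ f ≠ 1)

lemma sum_fib_translate [NeZero M] (e : Crd M p) (ψ : AddChar (ZMod M) ℂ) (l : Fin 3)
    (x w : ZMod M) : ∑ y ∈ fib e l (x + w), ψ y = (∑ y ∈ fib e l x, ψ y) * ψ w := by
  classical
  rw [fib_image, Finset.sum_image (by intro a _ b _ h; exact add_right_cancel h), Finset.sum_mul]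
  simp [AddChar.map_add_eq_mul]

lemma sum_fib_eq [NeZero M] (e : Crd M p) (ψ : AddChar (ZMod M) ℂ) (l : Fin 3) (h : Adm e ψ l)
    (x z : ZMod M) (hz : ∀ m, m ≠ l → e z m = e x m) :
    ∑ y ∈ fib e l z, ψ y = ∑ y ∈ fib e l x, ψ y := by
  have h1 := sum_fib_translate e ψ l x (z - x)
  rw [add_sub_cancel] at h1
  rw [h1]
  rcases h with h | ⟨f, hf, hf2, hf3⟩
  · rw [h (z - x) (fun m hm => by rw [e_sub, hz m hm, sub_self]), mul_one]
  · have h2 := sum_fib_translate e ψ l x f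
    have : fib e l (x + f) = fib e l x := by
      apply fib_eq
      rw [mem_fib]
      refine ⟨fun m hm => by rw [e_add, hf m hm, add_zero], by rw [bt_add, hf2, add_zero]⟩
    rw [this] at h2
    have : ∑ y ∈ fib e l x, ψ y = 0 := by
      have h3 : (∑ y ∈ fib e l x, ψ y) * (ψ f - 1) = 0 := by linear_combination -h2
      exact (mul_eq_zero.1 h3).resolve_right (sub_ne_zero.2 hf3)
    rw [this, zero_mul]

lemma shift [NeZero M] {e : Crd M p} (hp : ∀ m, (p m).Prime)
    {A B : Finset (ZMod M)} (C : Ctx e A B) (hT : Til A B) {l : Fin 3}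
    {x : ZMod M}
    (hline : ∀ z, Cf e A B x z → bt e l z ≠ bt e l x ∧ ∀ m, m ≠ l → e z m = e x m) :
    ∃ A', Til A' B ∧ x ∈ A' ∧ (∀ y, (∀ m, bt e m y = bt e m x) → y ∈ A → y ∈ A') ∧
      ∀ ψ : AddChar (ZMod M) ℂ, Adm e ψ l → ∑ a ∈ A', ψ a = ∑ a ∈ A, ψ a := by
  classical
  have hfact : Fact (p l).Prime := ⟨hp l⟩
  obtain ⟨b, hb, -⟩ := C.bS 0
  obtain ⟨z0, hz0, b', hb', hzb⟩ := C.til 1 isUnit_one (x + b)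
  rw [one_mul] at hzb
  have hc0 : Cf e A B x z0 := Cf.of_eq hz0 hb hb' hzb
  obtain ⟨hl0, hz0x⟩ := hline z0 hc0
  have hAl : ∀ y ∈ A, (∀ m, m ≠ l → e y m = e x m) → y ∈ fib e l z0 := by
    intro y hy hyl
    rw [mem_fib]
    refine ⟨fun m hm => by rw [hyl m hm, hz0x m hm], ?_⟩
    by_contra hne
    have : y = z0 := by
      refine hc0.no C hy hz0 (ty_mk' fun m => ?_)
      by_cases hm : m = l
      · subst hm; right; left; exact ⟨hne, hl0⟩
      · left; exact ⟨by rw [hyl m hm, hz0x m hm], hz0x m hm⟩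
    exact hne (by rw [this])
  have hfibA : fib e l z0 ⊆ A := by
    intro y hy
    rw [mem_fib] at hy
    have ht : ty e (y - x) (z0 - x) := by
      refine ty_mk' fun m => ?_
      by_cases hm : m = l
      · subst hm; right; left; exact ⟨by rwa [hy.2], hl0⟩
      · left; exact ⟨by rw [hy.1 m hm, hz0x m hm], hz0x m hm⟩
    obtain ⟨r, hr, hrr⟩ := ty_unit hp ht
    have hr1 : red (p l) (e r l) = 1 := by
      have h1 := congrArg (bt e l) hrr
      have h2 : bt e l (r * (y - x)) = red (p l) (e r l) * bt e l (y - x) := by simp [bt]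
      rw [h2, bt_sub, bt_sub, hy.2] at h1
      have h3 : bt e l z0 - bt e l x ≠ 0 := sub_ne_zero.2 hl0
      exact mul_right_cancel₀ h3 (by rw [← h1, one_mul])
    obtain ⟨z, hz, b'', hb'', hzr⟩ := C.til r hr (r * x + b)
    have hd : b - b'' = r * (z - x) := by linear_combination -hzr
    have hcz : Cf e A B x z := ⟨hz, b, hb, b'', hb'', by rw [hd]; exact ty_of_unit hr⟩
    obtain ⟨-, hzx⟩ := hline z hcz
    have hzf := mem_fib.1 (hAl z hz hzx)
    have hbb : b'' = b' := by
      refine C.bD b'' hb'' b' hb' fun m => ?_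
      have q1 : b'' = b - r * (z - x) := by linear_combination -hd
      have q2 : b' = b - (z0 - x) := by linear_combination hzb
      rw [q1, q2, bt_sub, bt_sub]
      congr 1
      have h2 : bt e m (r * (z - x)) = red (p m) (e r m) * bt e m (z - x) := by simp [bt]
      rw [h2, bt_sub, bt_sub]
      by_cases hm : m = l
      · subst hm; rw [hr1, one_mul, hzf.2]
      · rw [bt_of_e e (hzx m hm), bt_of_e e (hz0x m hm)]; simp
    have : r * (y - x) = r * (z - x) := by
      rw [← hd, ← hrr, hbb]; linear_combination hzb
    have := hr.mul_right_injective this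
    have : y = z := by linear_combination this
    rw [this]; exact hz
  have hdis : Disjoint A (fib e l x) := by
    rw [Finset.disjoint_left]
    intro y hy hy2
    rw [mem_fib] at hy2
    have := (mem_fib.1 (hAl y hy hy2.1)).2
    exact hl0 (this.symm.trans hy2.2)
  have hcardf : (fib e l z0).card = (fib e l x).card := by
    have := fib_image e l x (z0 - x)
    rw [add_sub_cancel] at this
    rw [this, Finset.card_image_of_injective _ (add_left_injective _)]
  have hSsub : (fib e l x ×ˢ B).image (fun q => q.1 + q.2) ⊆
      (fib e l z0 ×ˢ B).image (fun q => q.1 + q.2) := by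
    intro w hw
    obtain ⟨⟨y, c⟩, hyc, rfl⟩ := Finset.mem_image.1 hw
    rw [Finset.mem_product] at hyc
    obtain ⟨z, hz, c', hc', hzc⟩ := C.til 1 isUnit_one (x + c)
    rw [one_mul] at hzc
    have hcz : Cf e A B x z := Cf.of_eq hz hyc.2 hc' hzc
    have hzf := hAl z hz (hline z hcz).2
    refine Finset.mem_image.2 ⟨(y - x + z, c'), ?_, ?_⟩
    · rw [Finset.mem_product]
      refine ⟨?_, hc'⟩
      have h1 := mem_fib.1 hyc.1
      have h2 := mem_fib.1 hzf
      refine mem_fib.2 ⟨fun m hm => ?_, ?_⟩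
      · rw [e_add, e_sub, h1.1 m hm, h2.1 m hm]; ring
      · rw [bt_add, bt_sub, h1.2, h2.2]; ring
    · simp only
      linear_combination hzc
  have hSeq : (fib e l x ×ˢ B).image (fun q => q.1 + q.2) =
      (fib e l z0 ×ˢ B).image (fun q => q.1 + q.2) := by
    apply Finset.eq_of_subset_of_card_le hSsub
    refine Finset.card_image_le.trans ?_
    rw [Finset.card_image_of_injOn, Finset.card_product, Finset.card_product, hcardf]
    rintro ⟨f, c⟩ hf ⟨f', c'⟩ hf' h
    simp only [Finset.coe_product, Set.mem_prod, Finset.mem_coe] at hf hf' h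
    have h1 := mem_fib.1 hf.1
    have h2 := mem_fib.1 hf'.1
    have hcc : c = c' := by
      refine C.bD c hf.2 c' hf'.2 fun m => ?_
      have h3 := congrArg (bt e m) h
      rw [bt_add, bt_add] at h3
      have h4 : bt e m f = bt e m f' := by
        by_cases hm : m = l
        · subst hm; rw [h1.2, h2.2]
        · exact bt_of_e e ((h1.1 m hm).trans (h2.1 m hm).symm)
      rw [h4] at h3
      exact add_left_cancel h3
    subst hcc
    simpa using h
  have hdis2 : Disjoint (A \ fib e l z0) (fib e l x) :=
    Finset.disjoint_of_subset_left Finset.sdiff_subset hdis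
  refine ⟨(A \ fib e l z0) ∪ fib e l x, ⟨?_, ?_⟩, ?_, ?_, ?_⟩
  · intro w
    obtain ⟨a, ha, c, hc, hac⟩ := hT.1 w
    by_cases haf : a ∈ fib e l z0
    · have : w ∈ (fib e l z0 ×ˢ B).image (fun q => q.1 + q.2) :=
        Finset.mem_image.2 ⟨(a, c), Finset.mem_product.2 ⟨haf, hc⟩, hac⟩
      rw [← hSeq] at this
      obtain ⟨⟨y, c'⟩, hyc, h⟩ := Finset.mem_image.1 this
      rw [Finset.mem_product] at hyc
      exact ⟨y, Finset.mem_union_right _ hyc.1, c', hyc.2, h⟩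
    · exact ⟨a, Finset.mem_union_left _ (Finset.mem_sdiff.2 ⟨ha, haf⟩), c, hc, hac⟩
  · rw [Finset.card_union_of_disjoint hdis2, ← hT.2, Finset.card_sdiff_of_subset hfibA, hcardf,
      Nat.sub_add_cancel]
    rw [← hcardf]; exact Finset.card_le_card hfibA
  · exact Finset.mem_union_right _ (mem_fib.2 ⟨fun _ _ => rfl, rfl⟩)
  · intro y hy hyA
    refine Finset.mem_union_left _ (Finset.mem_sdiff.2 ⟨hyA, fun h => ?_⟩)
    exact hl0 ((mem_fib.1 h).2.symm.trans (hy l))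
  · intro ψ hψ
    rw [Finset.sum_union hdis2, ← sum_fib_eq e ψ l hψ x z0 hz0x,
      Finset.sum_sdiff hfibA]

end core


section core
variable {M : ℕ} {p : Fin 3 → ℕ}

/-- membership in the grid -/
def InL (e : Crd M p) (x0 x : ZMod M) : Prop := ∀ m, bt e m x = bt e m x0

/-- point with prescribed coordinates -/
noncomputable def pt (e : Crd M p) (v μ : Fin 3) (α β γ : ZMod M) : ZMod M :=
  e.symm (fun m => if m = v then e α m else if m = μ then e β m else e γ m)

lemma pt_v (e : Crd M p) (v μ : Fin 3) (α β γ : ZMod M) : e (pt e v μ α β γ) v = e α v := by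
  rw [pt, e.apply_symm_apply]; simp

lemma pt_μ (e : Crd M p) {v μ : Fin 3} (h : v ≠ μ) (α β γ : ZMod M) :
    e (pt e v μ α β γ) μ = e β μ := by
  rw [pt, e.apply_symm_apply]; simp [h.symm]

lemma pt_ν (e : Crd M p) {v μ ν : Fin 3} (h : v ≠ ν) (h' : μ ≠ ν) (α β γ : ZMod M) :
    e (pt e v μ α β γ) ν = e γ ν := by
  rw [pt, e.apply_symm_apply]; simp [h.symm, h'.symm]

lemma pt_L {e : Crd M p} {v μ : Fin 3} {x0 α β γ : ZMod M} (ha : InL e x0 α) (hb : InL e x0 β)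
    (hc : InL e x0 γ) : InL e x0 (pt e v μ α β γ) := by
  intro m
  rw [bt, pt, e.apply_symm_apply]
  split_ifs
  · exact ha m
  · exact hb m
  · exact hc m

/-- box data, with distinguished direction `v` -/
structure Bx (e : Crd M p) (A : Finset (ZMod M)) (x0 : ZMod M) (I : ∀ m, Set (ZMod (p m ^ 2)))
    (u q : ZMod M) (v μ ν : Fin 3) : Prop where
  hcov : ∀ m, m = v ∨ m = μ ∨ m = ν
  hvμ : v ≠ μ
  hvν : v ≠ ν
  hμν : μ ≠ ν
  hu : InL e x0 u
  hq : InL e x0 q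
  huI : ∀ m, e u m ∈ I m
  hqI : ∀ m, e q m ∉ I m
  hB1 : ∀ y, InL e x0 y → e y μ ∈ I μ → e y ν ∈ I ν → y ∈ A
  hB2 : ∀ y, InL e x0 y → e y v ∉ I v → e y μ ∉ I μ → e y ν ∉ I ν → y ∈ A

lemma Bx.swap {e : Crd M p} {A : Finset (ZMod M)} {x0 : ZMod M} {I : ∀ m, Set (ZMod (p m ^ 2))}
    {u q : ZMod M} {v μ ν : Fin 3} (h : Bx e A x0 I u q v μ ν) : Bx e A x0 I u q v ν μ where
  hcov := fun m => by have := h.hcov m; tauto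
  hvμ := h.hvν
  hvν := h.hvμ
  hμν := h.hμν.symm
  hu := h.hu
  hq := h.hq
  huI := h.huI
  hqI := h.hqI
  hB1 := fun y h1 h2 h3 => h.hB1 y h1 h3 h2
  hB2 := fun y h1 h2 h3 h4 => h.hB2 y h1 h2 h4 h3

lemma third {e : Crd M p} (hp : ∀ m, (p m).Prime) (hodd : ∀ m, Odd (p m)) {x0 u q : ZMod M}
    (hu : InL e x0 u) (hq : InL e x0 q) (μ : Fin 3) (hne : e u μ ≠ e q μ) :
    ∃ y, InL e x0 y ∧ e y μ ≠ e u μ ∧ e y μ ≠ e q μ := by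
  refine ⟨u + (u - q), fun m => ?_, ?_, ?_⟩
  · rw [bt_add, bt_sub, hu m, hq m]; ring
  · rw [e_add, e_sub]
    intro h
    apply hne
    linear_combination h
  · rw [e_add, e_sub]
    intro h
    apply hne
    have h1 : ((2 : ℕ) : ZMod (p μ ^ 2)) * (e u μ - e q μ) = 0 := by
      push_cast; linear_combination h
    have h2 : (p μ : ZMod (p μ ^ 2)) * (e u μ - e q μ) = 0 := by
      apply red_mul_zero (hp μ)
      have h3 := hu μ
      have h4 := hq μ
      rw [bt] at h3 h4
      rw [map_sub, h3, h4, sub_self]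
    exact sub_eq_zero.1 (cast_coprime_zero (Nat.coprime_two_left.2 (hodd μ)) _ h1 h2)

/-- the direction data produced by a step -/
def Good (e : Crd M p) (A B : Finset (ZMod M)) (x0 : ZMod M) : Prop :=
  ∃ l x, InL e x0 x ∧ x ∉ A ∧
    ∀ z, Cf e A B x z → bt e l z ≠ bt e l x ∧ ∀ m, m ≠ l → e z m = e x m

lemma InL.inS {e : Crd M p} {A : Finset (ZMod M)} {x0 x a : ZMod M} (hx : InL e x0 x)
    (ha : InL e x0 a) (h : a ∈ A) : InS e A x a :=
  ⟨h, fun m => (ha m).trans (hx m).symm⟩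

lemma stepA {e : Crd M p} (hp : ∀ m, (p m).Prime) (hpi : Function.Injective p)
    (hodd : ∀ m, Odd (p m))
    {A B : Finset (ZMod M)} (C : Ctx e A B) {x0 : ZMod M} {I : ∀ m, Set (ZMod (p m ^ 2))}
    {u q : ZMod M} {v μ ν : Fin 3} (D : Bx e A x0 I u q v μ ν)
    {x : ZMod M} (hx : InL e x0 x) (hxA : x ∉ A) (hxv : e x v ∉ I v) (hxμ : e x μ ∈ I μ)
    (hxν : e x ν ∉ I ν) : Good e A B x0 := by
  obtain ⟨hcov, hvμ, hvν, hμν, hu, hq, huI, hqI, hB1, hB2⟩ := D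
  have Pv := pt_v e v μ
  have Pμ := pt_μ e hvμ
  have Pν := pt_ν e hvν hμν
  have mem1 : ∀ α β γ, InL e x0 α → InL e x0 β → InL e x0 γ → e β μ ∈ I μ → e γ ν ∈ I ν →
      pt e v μ α β γ ∈ A := fun α β γ h1 h2 h3 h4 h5 =>
    hB1 _ (pt_L h1 h2 h3) (by rwa [Pμ]) (by rwa [Pν])
  have mem2 : ∀ α β γ, InL e x0 α → InL e x0 β → InL e x0 γ → e α v ∉ I v →
      e β μ ∉ I μ → e γ ν ∉ I ν →
      pt e v μ α β γ ∈ A := fun α β γ h1 h2 h3 h4 h5 h6 =>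
    hB2 _ (pt_L h1 h2 h3) (by rwa [Pv]) (by rwa [Pμ]) (by rwa [Pν])
  have hfx : ∀ m, m ≠ v → ∃ a, InS e A x a ∧ ∀ m', m' ≠ m → e a m' = e x m' := by
    intro m hm
    rcases hcov m with rfl | rfl | rfl
    · exact absurd rfl hm
    · refine ⟨pt e v m x q x, hx.inS (pt_L hx hq hx) (mem2 _ _ _ hx hq hx hxv (hqI _) hxν), ?_⟩
      intro m' hm'
      rcases hcov m' with rfl | rfl | rfl
      · exact Pv _ _ _
      · exact absurd rfl hm'
      · exact Pν _ _ _
    · refine ⟨pt e v μ x x u, hx.inS (pt_L hx hx hu) (mem1 _ _ _ hx hx hu hxμ (huI _)), ?_⟩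
      intro m' hm'
      rcases hcov m' with rfl | rfl | rfl
      · exact Pv _ _ _
      · exact Pμ _ _ _
      · exact absurd rfl hm'
  by_cases hE : ∃ a3, InL e x0 a3 ∧ a3 ∈ A ∧ e a3 μ ∉ I μ ∧ e a3 ν ∈ I ν
  · obtain ⟨a3, h3L, h3A, h3μ, h3ν⟩ := hE
    refine ⟨v, x, hx, hxA, dir_lemma hp hpi C hcov hvμ hvν hxA hfx
      (a1 := pt e v μ x x a3) (a2 := pt e v μ x a3 x)
      (hx.inS (pt_L hx hx h3L) (mem1 _ _ _ hx hx h3L hxμ h3ν))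
      (hx.inS (pt_L hx h3L hx) (mem2 _ _ _ hx h3L hx hxv h3μ hxν)) (Pμ _ _ _) (Pν _ _ _)
      (Or.inl ⟨a3, hx.inS h3L h3A, (Pμ _ _ _).symm, (Pν _ _ _).symm⟩)⟩
  · obtain ⟨y, hy, hyu, hyq⟩ := third hp hodd hu hq μ (fun h => hqI μ (h ▸ huI μ))
    by_cases hyI : e y μ ∈ I μ
    · have hx' : InL e x0 (pt e v μ q q u) := pt_L hq hq hu
      have hx'A : pt e v μ q q u ∉ A := fun h => hE ⟨_, hx', h, by rw [Pμ]; exact hqI _,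
        by rw [Pν]; exact huI _⟩
      have hm1 : InS e A (pt e v μ q q u) (pt e v μ q q q) :=
        hx'.inS (pt_L hq hq hq) (mem2 _ _ _ hq hq hq (hqI _) (hqI _) (hqI _))
      have hm2 : ∀ w, InL e x0 w → e w μ ∈ I μ →
          InS e A (pt e v μ q q u) (pt e v μ q w u) := fun w hw hwI =>
        hx'.inS (pt_L hq hw hu) (mem1 _ _ _ hq hw hu hwI (huI _))
      refine ⟨v, _, hx', hx'A, dir_lemma hp hpi C hcov hvμ hvν hx'A ?_ hm1 (hm2 u hu (huI _))
        (by rw [Pμ, Pμ]) (by rw [Pν, Pν])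
        (Or.inr ⟨_, hm2 y hy hyI, by rw [Pν, Pν], by rw [Pμ, Pμ]; exact hyu⟩)⟩
      intro m hm
      rcases hcov m with rfl | rfl | rfl
      · exact absurd rfl hm
      · refine ⟨_, hm2 u hu (huI _), ?_⟩
        intro m' hm'
        rcases hcov m' with rfl | rfl | rfl
        · rw [Pv, Pv]
        · exact absurd rfl hm'
        · rw [Pν, Pν]
      · refine ⟨_, hm1, ?_⟩
        intro m' hm'
        rcases hcov m' with rfl | rfl | rfl
        · rw [Pv, Pv]
        · rw [Pμ, Pμ]
        · exact absurd rfl hm'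
    · have hm2 : ∀ w, InL e x0 w → e w μ ∉ I μ →
          InS e A x (pt e v μ x w x) := fun w hw hwI =>
        hx.inS (pt_L hx hw hx) (mem2 _ _ _ hx hw hx hxv hwI hxν)
      exact ⟨v, x, hx, hxA, dir_lemma hp hpi C hcov hvμ hvν hxA hfx
        (a1 := pt e v μ x x u) (hx.inS (pt_L hx hx hu) (mem1 _ _ _ hx hx hu hxμ (huI _)))
        (hm2 q hq (hqI _)) (Pμ _ _ _) (Pν _ _ _)
        (Or.inr ⟨_, hm2 y hy hyI, Pν _ _ _, by rw [Pμ, Pμ]; exact hyq⟩)⟩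

lemma stepB {e : Crd M p} (hp : ∀ m, (p m).Prime) (hpi : Function.Injective p)
    {A B : Finset (ZMod M)} (C : Ctx e A B) {x0 : ZMod M} {I : ∀ m, Set (ZMod (p m ^ 2))}
    {u q : ZMod M} {v μ ν : Fin 3} (D : Bx e A x0 I u q v μ ν)
    (hA : ∀ y, InL e x0 y → e y v ∉ I v → y ∈ A)
    {x : ZMod M} (hx : InL e x0 x) (hxA : x ∉ A)
    (hxν : e x ν ∈ I ν) : Good e A B x0 := by
  obtain ⟨hcov, hvμ, hvν, hμν, hu, hq, huI, hqI, hB1, hB2⟩ := D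
  have Pv := pt_v e v μ
  have Pμ := pt_μ e hvμ
  have Pν := pt_ν e hvν hμν
  have mem1 : ∀ α β γ, InL e x0 α → InL e x0 β → InL e x0 γ → e β μ ∈ I μ → e γ ν ∈ I ν →
      pt e v μ α β γ ∈ A := fun α β γ h1 h2 h3 h4 h5 =>
    hB1 _ (pt_L h1 h2 h3) (by rwa [Pμ]) (by rwa [Pν])
  have mem2 : ∀ β γ, InL e x0 β → InL e x0 γ → pt e v μ q β γ ∈ A := fun β γ h2 h3 =>
    hA _ (pt_L hq h2 h3) (by rw [Pv]; exact hqI _)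
  have k1 := hx.inS (pt_L hx hu hx) (mem1 _ _ _ hx hu hx (huI _) hxν)
  have k2 : ∀ β γ, InL e x0 β → InL e x0 γ → InS e A x (pt e v μ q β γ) :=
    fun β γ h2 h3 => hx.inS (pt_L hq h2 h3) (mem2 _ _ h2 h3)
  have hcov' : ∀ m, m = ν ∨ m = v ∨ m = μ := fun m => by have := hcov m; tauto
  refine ⟨ν, x, hx, hxA, dir_lemma hp hpi C hcov' hvν.symm hμν.symm hxA ?_ k1 (k2 x q hx hq)
    (Pv _ _ _) (Pμ _ _ _) (Or.inl ⟨_, k2 u u hu hu, ?_, ?_⟩)⟩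
  · intro m hm
    rcases hcov m with rfl | rfl | rfl
    · refine ⟨_, k2 x x hx hx, ?_⟩
      intro m' hm'
      rcases hcov m' with rfl | rfl | rfl
      · exact absurd rfl hm'
      · rw [Pμ]
      · rw [Pν]
    · refine ⟨_, k1, ?_⟩
      intro m' hm'
      rcases hcov m' with rfl | rfl | rfl
      · rw [Pv]
      · exact absurd rfl hm'
      · rw [Pν]
    · exact absurd rfl hm
  · rw [Pv, Pv]
  · rw [Pμ, Pμ]

lemma step {e : Crd M p} (hp : ∀ m, (p m).Prime) (hpi : Function.Injective p)
    (hodd : ∀ m, Odd (p m))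
    {A B : Finset (ZMod M)} (C : Ctx e A B) {x0 : ZMod M} {I : ∀ m, Set (ZMod (p m ^ 2))}
    {u q : ZMod M} {v μ ν : Fin 3} (D : Bx e A x0 I u q v μ ν)
    {x : ZMod M} (hx : InL e x0 x) (hxA : x ∉ A) : Good e A B x0 := by
  by_cases hA : ∀ y, InL e x0 y → e y v ∉ I v → y ∈ A
  · by_cases hν : e x ν ∈ I ν
    · exact stepB hp hpi C D hA hx hxA hν
    by_cases hμ : e x μ ∈ I μ
    · exact stepB hp hpi C D.swap hA hx hxA hμ
    by_cases hBν : ∃ y, InL e x0 y ∧ y ∉ A ∧ e y ν ∈ I ν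
    · obtain ⟨y, h1, h2, h3⟩ := hBν
      exact stepB hp hpi C D hA h1 h2 h3
    by_cases hBμ : ∃ y, InL e x0 y ∧ y ∉ A ∧ e y μ ∈ I μ
    · obtain ⟨y, h1, h2, h3⟩ := hBμ
      exact stepB hp hpi C D.swap hA h1 h2 h3
    exfalso
    push Not at hBν hBμ
    obtain ⟨hcov, hvμ, hvν, hμν, hu, hq, huI, hqI, hB1, hB2⟩ := D
    have Pv := pt_v e v μ
    have Pμ := pt_μ e hvμ
    have Pν := pt_ν e hvν hμν
    obtain ⟨b, hb, -⟩ := C.bS 0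
    obtain ⟨z0, hz0, b', hb', hzb⟩ := C.til 1 isUnit_one (x + b)
    rw [one_mul] at hzb
    have hc0 : Cf e A B x z0 := Cf.of_eq hz0 hb hb' hzb
    obtain ⟨m, hm⟩ := hc0.dir C hxA
    apply hm
    rcases hcov m with rfl | rfl | rfl
    · have k : pt e m μ q x x ∈ A := hA _ (pt_L hq hx hx) (by rw [Pv]; exact hqI _)
      refine hc0.not_dir C (hx.inS (pt_L hq hx hx) k) ?_
      intro m' hm'
      rcases hcov m' with rfl | rfl | rfl
      · exact absurd rfl hm'
      · rw [Pμ]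
      · rw [Pν]
    · have k : pt e v m x u x ∈ A := by
        by_contra hk
        exact hBμ _ (pt_L hx hu hx) hk (by rw [Pμ]; exact huI _)
      refine hc0.not_dir C (hx.inS (pt_L hx hu hx) k) ?_
      intro m' hm'
      rcases hcov m' with rfl | rfl | rfl
      · rw [Pv]
      · exact absurd rfl hm'
      · rw [Pν]
    · have k : pt e v μ x x u ∈ A := by
        by_contra hk
        exact hBν _ (pt_L hx hx hu) hk (by rw [Pν]; exact huI _)
      refine hc0.not_dir C (hx.inS (pt_L hx hx hu) k) ?_
      intro m' hm'
      rcases hcov m' with rfl | rfl | rfl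
      · rw [Pv]
      · rw [Pμ]
      · exact absurd rfl hm'
  · push Not at hA
    obtain ⟨y, hy, hyv, hyA⟩ := hA
    by_cases hμ : e y μ ∈ I μ
    · have hν : e y ν ∉ I ν := fun h => hyA (D.hB1 y hy hμ h)
      exact stepA hp hpi hodd C D hy hyA hyv hμ hν
    · have hν : e y ν ∈ I ν := by
        by_contra h
        exact hyA (D.hB2 y hy hyv hμ h)
      exact stepA hp hpi hodd C D.swap hy hyA hyv hν hμ

lemma Bx.mono {e : Crd M p} {A A' : Finset (ZMod M)} {x0 : ZMod M}
    {I : ∀ m, Set (ZMod (p m ^ 2))}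
    {u q : ZMod M} {v μ ν : Fin 3} (h : Bx e A x0 I u q v μ ν)
    (hA : ∀ y, InL e x0 y → y ∈ A → y ∈ A') : Bx e A' x0 I u q v μ ν :=
  { h with
    hB1 := fun y h1 h2 h3 => hA y h1 (h.hB1 y h1 h2 h3)
    hB2 := fun y h1 h2 h3 h4 => hA y h1 (h.hB2 y h1 h2 h3 h4) }

open Classical in
lemma core_sum [NeZero M] {e : Crd M p} (hp : ∀ m, (p m).Prime) (hpi : Function.Injective p)
    (hodd : ∀ m, Odd (p m)) {B : Finset (ZMod M)} (hB : B.card = ∏ m, p m)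
    (bD : ∀ b ∈ B, ∀ b' ∈ B, (∀ m, bt e m b = bt e m b') → b = b')
    {x0 : ZMod M} {I : ∀ m, Set (ZMod (p m ^ 2))}
    {u q : ZMod M} {v μ ν : Fin 3}
    (ψ : AddChar (ZMod M) ℂ) (hψ : ∀ l, Adm e ψ l)
    (hψ2 : ∃ f, (∀ m, bt e m f = 0) ∧ ψ f ≠ 1) :
    ∀ (n : ℕ) (A : Finset (ZMod M)), (Finset.univ.filter (fun y => InL e x0 y ∧ y ∉ A)).card = n →
      Til A B → Bx e A x0 I u q v μ ν → ∑ a ∈ A, ψ a = 0 := by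
  intro n
  induction n using Nat.strong_induction_on with
  | _ n ih =>
  intro A hn hT D
  have C := mkCtx e hp hT hB bD
  by_cases hL : ∃ x, InL e x0 x ∧ x ∉ A
  · obtain ⟨x, hx, hxA⟩ := hL
    obtain ⟨l, y, hy, hyA, hline⟩ := step hp hpi hodd C D hx hxA
    obtain ⟨A', hT', hyA', hsub, hsum⟩ := shift hp C hT hline
    have hsub' : ∀ w, InL e x0 w → w ∈ A → w ∈ A' := fun w hw hwA =>
      hsub w (fun m => (hw m).trans (hy m).symm) hwA
    rw [← hsum ψ (hψ l)]
    refine ih _ ?_ A' rfl hT' (D.mono hsub')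
    rw [← hn]
    apply Finset.card_lt_card
    rw [Finset.ssubset_iff_of_subset]
    · exact ⟨y, by simp [hy, hyA], by simp [hyA']⟩
    · intro w hw
      simp only [Finset.mem_filter, Finset.mem_univ, true_and] at hw ⊢
      exact ⟨hw.1, fun h => hw.2 (hsub' w hw.1 h)⟩
  · push Not at hL
    have hAL : ∀ a ∈ A, InL e x0 a := by
      intro a ha
      obtain ⟨b0, hb0, -⟩ := C.bS 0
      obtain ⟨b', hb', hbb⟩ := C.bS (a + b0 - x0)
      have h1 : InL e x0 (a + b0 - b') := by
        intro m
        rw [bt_sub, hbb, bt_sub]; ring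
      have := hT.inj ha (hL _ h1) hb0 hb' (by ring)
      rw [this.1]; exact h1
    obtain ⟨f, hf, hf1⟩ := hψ2
    have himg : A.image (fun y => y + f) = A := by
      apply Finset.eq_of_subset_of_card_le
      · intro w hw
        obtain ⟨a, ha, rfl⟩ := Finset.mem_image.1 hw
        apply hL
        intro m
        rw [bt_add, hf, add_zero, hAL a ha m]
      · rw [Finset.card_image_of_injective _ (add_left_injective _)]
    have h2 : ∑ a ∈ A, ψ a = (∑ a ∈ A, ψ a) * ψ f := by
      conv_lhs => rw [← himg]
      rw [Finset.sum_image (by intro a _ b _ h; exact add_right_cancel h), Finset.sum_mul]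
      simp [AddChar.map_add_eq_mul]
    have h3 : (∑ a ∈ A, ψ a) * (ψ f - 1) = 0 := by linear_combination -h2
    exact (mul_eq_zero.1 h3).resolve_right (sub_ne_zero.2 hf1)

end core


section cyc

lemma cyc_iff {M s : ℕ} (hs : 0 < s) {A : Finset (ZMod M)} {ζ : ℂ} (hζ : IsPrimitiveRoot ζ s) :
    cycDvd M s A ↔ ∑ a ∈ A, ζ ^ a.val = 0 := by
  rw [cycDvd, cyclotomic_eq_minpoly hζ hs,
    ← minpoly.isIntegrallyClosed_dvd_iff (hζ.isIntegral hs), maskPoly]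
  simp

lemma mask_eval {M : ℕ} (A : Finset (ZMod M)) : (maskPoly M A).eval 1 = A.card := by
  simp [maskPoly, eval_finsetSum]

lemma sq_dvd_card {M q : ℕ} (hq : q.Prime) {A : Finset (ZMod M)} (h1 : cycDvd M (q ^ 1) A)
    (h2 : cycDvd M (q ^ 2) A) : q ^ 2 ∣ A.card := by
  have : Fact q.Prime := ⟨hq⟩
  obtain ⟨g, hg⟩ := h1
  rw [cycDvd, hg] at h2
  have hirr : Irreducible (cyclotomic (q ^ 2) ℤ) := cyclotomic.irreducible (pow_pos hq.pos 2)
  rcases hirr.prime.dvd_or_dvd h2 with h | ⟨k, rfl⟩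
  · exfalso
    have := natDegree_le_of_dvd h (cyclotomic_ne_zero _ _)
    rw [natDegree_cyclotomic, natDegree_cyclotomic, Nat.totient_prime_pow hq (by norm_num),
      Nat.totient_prime_pow hq (by norm_num)] at this
    have h2 := hq.two_le
    have h3 : 0 < q - 1 := by omega
    simp only [Nat.add_one_sub_one, pow_one, Nat.sub_self, pow_zero, one_mul] at this
    nlinarith
  · have h := congrArg (eval 1) hg
    rw [mask_eval, eval_mul, eval_mul] at h
    have e1 : eval 1 (cyclotomic (q ^ 1) ℤ) = q := by
      have := eval_one_cyclotomic_prime_pow (R := ℤ) 0 (p := q)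
      simpa using this
    have e2 : eval 1 (cyclotomic (q ^ 2) ℤ) = q := eval_one_cyclotomic_prime_pow (R := ℤ) 1 (p := q)
    rw [e1, e2] at h
    rw [← Int.natCast_dvd_natCast, h]
    exact ⟨eval 1 k, by push_cast; ring⟩

end cyc

section trans
variable {M : ℕ} {p : Fin 3 → ℕ}

lemma dvd_val_iff [NeZero M] {d : ℕ} (hd : d ∣ M) (x : ZMod M) : (d : ZMod M) ∣ x ↔ d ∣ x.val := by
  constructor
  · rintro ⟨y, rfl⟩
    rw [ZMod.val_mul, Nat.dvd_mod_iff hd, ZMod.val_natCast]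
    exact Dvd.dvd.mul_right ((Nat.dvd_mod_iff hd).2 dvd_rfl) _
  · rintro ⟨k, hk⟩
    refine ⟨k, ?_⟩
    rw [← ZMod.natCast_zmod_val x, hk]
    push_cast; ring

lemma e_val [NeZero M] (e : Crd M p) (x : ZMod M) (m : Fin 3) :
    e x m = (x.val : ZMod (p m ^ 2)) := by
  conv_lhs => rw [← ZMod.natCast_zmod_val x, map_natCast]
  rfl

lemma e_nat (e : Crd M p) (n : ℕ) (m : Fin 3) :
    e n m = (n : ZMod (p m ^ 2)) := by
  rw [map_natCast]; rfl

lemma bt_nat (e : Crd M p) (n : ℕ) (m : Fin 3) :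
    bt e m n = (n : ZMod (p m)) := by
  rw [bt, e_nat, red_natCast]

lemma e_zero [NeZero M] (e : Crd M p) (x : ZMod M) (m : Fin 3) :
    e x m = 0 ↔ p m ^ 2 ∣ x.val := by
  rw [e_val, ZMod.natCast_eq_zero_iff]

lemma bt_zero [NeZero M] (e : Crd M p) (x : ZMod M) (m : Fin 3) :
    bt e m x = 0 ↔ p m ∣ x.val := by
  rw [bt, e_val, red_natCast, ZMod.natCast_eq_zero_iff]

lemma exists_crd (hp : ∀ m, (p m).Prime) (hpi : Function.Injective p) (hM : M = ∏ m, p m ^ 2) :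
    Nonempty (Crd M p) := by
  subst hM
  refine ⟨ZMod.prodEquivPi (fun m => p m ^ 2) ?_⟩
  intro i j hij
  exact Nat.Coprime.pow _ _ ((Nat.coprime_primes (hp i) (hp j)).2 (fun h => hij (hpi h)))

lemma dvd_all (hp : ∀ m, (p m).Prime) (hpi : Function.Injective p) (n : ℕ) :
    (∏ m, p m) ∣ n ↔ ∀ m, p m ∣ n := by
  constructor
  · intro h m
    exact (Finset.dvd_prod_of_mem p (Finset.mem_univ m)).trans h
  · intro h
    apply Fintype.prod_dvd_of_isRelPrime _ h
    intro i j hij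
    exact Nat.coprime_iff_isRelPrime.1 ((Nat.coprime_primes (hp i) (hp j)).2 (fun h => hij (hpi h)))

lemma p_dvd (hM : M = ∏ m, p m ^ 2) (m : Fin 3) : p m ^ 2 ∣ M := by
  rw [hM]; exact Finset.dvd_prod_of_mem (fun m => p m ^ 2) (Finset.mem_univ m)

lemma ty_of_gcd [NeZero M] (e : Crd M p) (hM : M = ∏ m, p m ^ 2) {x y : ZMod M}
    (h : Nat.gcd x.val M = Nat.gcd y.val M) : ty e x y := by
  have key : ∀ d, d ∣ M → (d ∣ x.val ↔ d ∣ y.val) := by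
    intro d hd
    have : ∀ n, d ∣ n ↔ d ∣ Nat.gcd n M := fun n => by rw [Nat.dvd_gcd_iff]; tauto
    rw [this, h, ← this]
  intro m
  rw [e_zero, e_zero, bt_zero, bt_zero]
  exact ⟨key _ (p_dvd hM m), key _ ((dvd_pow_self _ two_ne_zero).trans (p_dvd hM m))⟩

lemma sq_not_dvd (hp : ∀ m, (p m).Prime) (hpi : Function.Injective p) (l : Fin 3) :
    ¬ p l ^ 2 ∣ ∏ m, p m := by
  rw [← Finset.mul_prod_erase _ p (Finset.mem_univ l), sq]
  intro h
  have := Nat.dvd_of_mul_dvd_mul_left (hp l).pos h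
  rw [(hp l).prime.dvd_finsetProd_iff] at this
  obtain ⟨m, hm, hd⟩ := this
  have := (Nat.prime_dvd_prime_iff_eq (hp l) (hp m)).1 hd
  exact (Finset.mem_erase.1 hm).1 (hpi this).symm

lemma T2_B [NeZero M] {e : Crd M p} (hp : ∀ m, (p m).Prime) (hpi : Function.Injective p)
    (hM : M = ∏ m, p m ^ 2) {A B : Finset (ZMod M)} (C : Ctx e A B) {s : ℕ} (hs : s ∣ ∏ m, p m)
    (hs1 : 1 < s) : cycDvd M s B := by
  classical
  have hζ := Complex.isPrimitiveRoot_exp s (by omega)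
  set ζ := Complex.exp (2 * Real.pi * Complex.I / s)
  rw [cyc_iff (by omega) hζ]
  have hDM : ∏ m, p m ∣ M := by
    rw [hM, Finset.prod_pow]; exact dvd_pow_self _ two_ne_zero
  have hζM : ζ ^ M = 1 := (hζ.pow_eq_one_iff_dvd M).2 (hs.trans hDM)
  set ψ := AddChar.zmodChar M hζM with hψdef
  have hψ : ∀ a, ψ a = ζ ^ a.val := AddChar.zmodChar_apply hζM
  have hψe : ∀ x y, (∀ m, bt e m x = bt e m y) → ψ x = ψ y := by
    intro x y h
    have h1 : ψ (x - y) = 1 := by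
      rw [hψ, hζ.pow_eq_one_iff_dvd]
      refine hs.trans ((dvd_all hp hpi _).2 fun m => ?_)
      rw [← bt_zero e, bt_sub, h m, sub_self]
    calc ψ x = ψ (x - y + y) := by ring_nf
      _ = ψ y := by rw [AddChar.map_add_eq_mul, h1, one_mul]
  choose σ hσB hσ using fun b : ZMod M => C.bS (b + 1)
  have hinj : Set.InjOn σ (B : Set (ZMod M)) := by
    intro b hb b' hb' h
    refine C.bD b hb b' hb' fun m => ?_
    have h1 := hσ b m
    rw [h, hσ, bt_add, bt_add] at h1
    exact (add_right_cancel h1).symm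
  have himg : B.image σ = B := by
    apply Finset.eq_of_subset_of_card_le
    · intro y hy
      obtain ⟨b, hb, rfl⟩ := Finset.mem_image.1 hy
      exact hσB b
    · rw [Finset.card_image_of_injOn hinj]
  simp only [← hψ]
  have h2 : ∑ b ∈ B, ψ b = (∑ b ∈ B, ψ b) * ψ 1 := by
    conv_lhs => rw [← himg]
    rw [Finset.sum_image hinj, Finset.sum_mul]
    refine Finset.sum_congr rfl fun b hb => ?_
    rw [hψe _ _ (hσ b), AddChar.map_add_eq_mul]
  have h3 : (∑ b ∈ B, ψ b) * (ψ 1 - 1) = 0 := by linear_combination -h2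
  have h4 : ψ 1 ≠ 1 := by
    have := AddChar.zmodChar_apply' hζM 1
    rw [Nat.cast_one, pow_one] at this
    rw [hψdef, this]
    exact hζ.ne_one hs1
  exact (mul_eq_zero.1 h3).resolve_right (sub_ne_zero.2 h4)

/-- prime powers dividing `M` -/
lemma pp_form (hp : ∀ m, (p m).Prime) (hpi : Function.Injective p) (hM : M = ∏ m, p m ^ 2)
    {q k : ℕ} (hq : q.Prime) (hk : 1 ≤ k) (h : q ^ k ∣ M) : (∃ m, q = p m) ∧ (k = 1 ∨ k = 2) := by
  have h1 : q ∣ ∏ m, p m ^ 2 := hM ▸ (dvd_pow_self q (by omega)).trans h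
  rw [hq.prime.dvd_finsetProd_iff] at h1
  obtain ⟨m, -, hm⟩ := h1
  have hm := (Nat.prime_dvd_prime_iff_eq hq (hp m)).1 (hq.dvd_of_dvd_pow hm)
  refine ⟨⟨m, hm⟩, ?_⟩
  by_contra hcon
  have h3 : 3 ≤ k := by omega
  have h4 : q ^ 3 ∣ M := (pow_dvd_pow q h3).trans h
  rw [hM, Finset.prod_pow, ← Finset.mul_prod_erase _ p (Finset.mem_univ m), ← hm, mul_pow,
    pow_succ q 2] at h4
  have h5 := Nat.dvd_of_mul_dvd_mul_left (pow_pos hq.pos 2) h4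
  have h6 := hq.dvd_of_dvd_pow h5
  apply sq_not_dvd hp hpi m
  rw [← Finset.mul_prod_erase _ p (Finset.mem_univ m), sq, ← hm]
  exact Nat.mul_dvd_mul_left q h6

lemma T2_A_core [NeZero M] {e : Crd M p} (hp : ∀ m, (p m).Prime) (hpi : Function.Injective p)
    (hM : M = ∏ m, p m ^ 2) {A : Finset (ZMod M)}
    (hA : ∀ ψ : AddChar (ZMod M) ℂ, (∀ l, Adm e ψ l) → (∃ f, (∀ m, bt e m f = 0) ∧ ψ f ≠ 1) →
      ∑ a ∈ A, ψ a = 0)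
    (Q : Finset ℕ) (hQ : Q.Nonempty) (hQp : ∀ q ∈ Q, ∃ m, q = p m) :
    cycDvd M (∏ q ∈ Q, q ^ 2) A := by
  classical
  set s := ∏ q ∈ Q, q ^ 2 with hsdef
  have hqpos : ∀ q ∈ Q, 0 < q := fun q hq => by
    obtain ⟨m, rfl⟩ := hQp q hq; exact (hp m).pos
  have hs0 : 0 < s := Finset.prod_pos fun q hq => pow_pos (hqpos q hq) 2
  have hsd : ∀ n, (∀ q ∈ Q, q ^ 2 ∣ n) → s ∣ n := by
    intro n hn
    apply Finset.prod_dvd_of_isRelPrime _ hn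
    intro q hq q' hq' hne
    obtain ⟨m, rfl⟩ := hQp q hq
    obtain ⟨m', rfl⟩ := hQp q' hq'
    exact Nat.coprime_iff_isRelPrime.1
      (Nat.Coprime.pow _ _ ((Nat.coprime_primes (hp m) (hp m')).2 hne))
  have hsM : s ∣ M := by
    apply hsd
    intro q hq
    obtain ⟨m, rfl⟩ := hQp q hq
    exact p_dvd hM m
  have hζ := Complex.isPrimitiveRoot_exp s (by omega)
  set ζ := Complex.exp (2 * Real.pi * Complex.I / s)
  rw [cyc_iff hs0 hζ]
  have hζM : ζ ^ M = 1 := (hζ.pow_eq_one_iff_dvd M).2 hsM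
  set ψ := AddChar.zmodChar M hζM with hψdef
  have hψ : ∀ a, ψ a = ζ ^ a.val := AddChar.zmodChar_apply hζM
  have hspec : ∀ l, p l ∈ Q → ∃ f, (∀ m, m ≠ l → e f m = 0) ∧ (∀ m, bt e m f = 0) ∧ ψ f ≠ 1 := by
    intro l hl
    obtain ⟨k, hk⟩ := (dvd_pow_self (p l) two_ne_zero).trans (p_dvd hM l)
    have hk2 : p l * ∏ m ∈ Finset.univ.erase l, p m ^ 2 = k := by
      have h1 := hM
      rw [← Finset.mul_prod_erase _ (fun m => p m ^ 2) (Finset.mem_univ l), hk, sq, mul_assoc] at h1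
      exact (Nat.eq_of_mul_eq_mul_left (hp l).pos h1).symm
    have h1 : ∀ m, m ≠ l → p m ^ 2 ∣ k := by
      intro m hm
      rw [← hk2]
      exact Dvd.dvd.mul_left
        (Finset.dvd_prod_of_mem (fun m => p m ^ 2) (Finset.mem_erase.2 ⟨hm, Finset.mem_univ _⟩)) _
    refine ⟨(k : ZMod M), ?_, ?_, ?_⟩
    · intro m hm
      rw [e_nat, ZMod.natCast_eq_zero_iff]; exact h1 m hm
    · intro m
      rw [bt_nat, ZMod.natCast_eq_zero_iff]
      by_cases hm : m = l
      · subst hm; rw [← hk2]; exact Dvd.intro _ rfl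
      · exact (dvd_pow_self _ two_ne_zero).trans (h1 m hm)
    · rw [hψdef, AddChar.zmodChar_apply' hζM, Ne, hζ.pow_eq_one_iff_dvd]
      intro h
      have h2 : p l ^ 2 ∣ k := (Finset.dvd_prod_of_mem (fun q => q ^ 2) hl).trans h
      have h3 : p l ^ 3 ∣ M := by
        rw [hk, pow_succ']; exact Nat.mul_dvd_mul_left _ h2
      have := (pp_form hp hpi hM (hp l) (by norm_num) h3).2
      omega
  simp only [← hψ]
  apply hA
  · intro l
    by_cases hl : p l ∈ Q
    · right
      obtain ⟨f, h1, h2, h3⟩ := hspec l hl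
      exact ⟨f, h1, h2 l, h3⟩
    · left
      intro f hf
      rw [hψ, hζ.pow_eq_one_iff_dvd]
      apply hsd
      intro q hq
      obtain ⟨m, rfl⟩ := hQp q hq
      rw [← e_zero e]
      exact hf m (fun h => hl (h ▸ hq))
  · obtain ⟨q, hq⟩ := hQ
    obtain ⟨m, rfl⟩ := hQp q hq
    obtain ⟨f, h1, h2, h3⟩ := hspec m hq
    exact ⟨f, h2, h3⟩

lemma T2_A [NeZero M] {e : Crd M p} (hp : ∀ m, (p m).Prime) (hpi : Function.Injective p)
    (hM : M = ∏ m, p m ^ 2) {A : Finset (ZMod M)} (hcard : A.card = ∏ m, p m)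
    (hA : ∀ ψ : AddChar (ZMod M) ℂ, (∀ l, Adm e ψ l) → (∃ f, (∀ m, bt e m f = 0) ∧ ψ f ≠ 1) →
      ∑ a ∈ A, ψ a = 0) : SatisfiesT2 M A := by
  intro Q k hQ h
  have hform : ∀ q ∈ Q, (∃ m, q = p m) ∧ (k q = 1 ∨ k q = 2) := fun q hq =>
    pp_form hp hpi hM (h q hq).1 (h q hq).2.1 (h q hq).2.2.1
  have hk : ∀ q ∈ Q, k q = 2 := by
    intro q hq
    obtain ⟨⟨m, rfl⟩, h1 | h2⟩ := hform q hq
    · exfalso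
      have h3 := (h _ hq).2.2.2
      rw [h1] at h3
      have h4 := T2_A_core hp hpi hM hA {p m} (by simp) (by simp)
      rw [Finset.prod_singleton] at h4
      have := sq_dvd_card (hp m) h3 h4
      rw [hcard] at this
      exact sq_not_dvd hp hpi m this
    · exact h2
  rw [Finset.prod_congr rfl (fun q hq => by rw [hk q hq])]
  exact T2_A_core hp hpi hM hA Q hQ (fun q hq => (hform q hq).1)

lemma T2_B' [NeZero M] {e : Crd M p} (hp : ∀ m, (p m).Prime) (hpi : Function.Injective p)
    (hM : M = ∏ m, p m ^ 2) {A B : Finset (ZMod M)} (C : Ctx e A B)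
    (hcard : B.card = ∏ m, p m) : SatisfiesT2 M B := by
  intro Q k hQ h
  have hform : ∀ q ∈ Q, (∃ m, q = p m) ∧ (k q = 1 ∨ k q = 2) := fun q hq =>
    pp_form hp hpi hM (h q hq).1 (h q hq).2.1 (h q hq).2.2.1
  have hk : ∀ q ∈ Q, k q = 1 := by
    intro q hq
    obtain ⟨⟨m, rfl⟩, h1 | h2⟩ := hform q hq
    · exact h1
    · exfalso
      have h3 := (h _ hq).2.2.2
      rw [h2] at h3
      have h4 := T2_B hp hpi hM C (s := p m ^ 1)
        (by rw [pow_one]; exact Finset.dvd_prod_of_mem p (Finset.mem_univ m))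
        (by rw [pow_one]; exact (hp m).one_lt)
      have := sq_dvd_card (hp m) h4 h3
      rw [hcard] at this
      exact sq_not_dvd hp hpi m this
  rw [Finset.prod_congr rfl (fun q hq => by rw [hk q hq, pow_one])]
  apply T2_B hp hpi hM C
  · apply Finset.prod_primes_dvd
    · intro q hq; exact (h q hq).1.prime
    · intro q hq
      obtain ⟨⟨m, rfl⟩, -⟩ := hform q hq
      exact Finset.dvd_prod_of_mem p (Finset.mem_univ m)
  · obtain ⟨q, hq⟩ := hQ
    have h0 : 0 < ∏ q ∈ Q, q := Finset.prod_pos fun q hq => (h q hq).1.pos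
    exact lt_of_lt_of_le (h q hq).1.one_lt
      (Nat.le_of_dvd h0 (Finset.dvd_prod_of_mem (fun q => q) hq))

end trans


section fin
variable {M : ℕ} {p : Fin 3 → ℕ}

lemma exists_Bx {e : Crd M p} {A : Finset (ZMod M)} {x0 : ZMod M} {P Pc : Set (ZMod M)}
    (hPL : ∀ y ∈ P, InL e x0 y) (hPA : ∀ y ∈ P, y ∈ A)
    (hbox : ∀ f : Fin 3 → ZMod M, (∀ m, f m ∈ P) → ∀ x, InL e x0 x → (∀ m, e x m = e (f m) m) → x ∈ P)
    (hPc : ∀ x, x ∈ Pc ↔ InL e x0 x ∧ ∀ u ∈ P, ∀ m, e x m ≠ e u m)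
    (hPcA : ∀ y ∈ Pc, y ∈ A) (hne : P.Nonempty) (hcne : Pc.Nonempty)
    {v μ ν : Fin 3} (hcov : ∀ m, m = v ∨ m = μ ∨ m = ν) (hvμ : v ≠ μ) (hvν : v ≠ ν) (hμν : μ ≠ ν)
    (hmix : ∀ x, InL e x0 x → (∃ u ∈ Pc, e x v = e u v) → (∃ w ∈ P, e x μ = e w μ) →
      (∃ w ∈ P, e x ν = e w ν) → x ∈ A) :
    ∃ (I : ∀ m, Set (ZMod (p m ^ 2))) (u q : ZMod M), Bx e A x0 I u q v μ ν := by
  obtain ⟨u, hu⟩ := hne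
  obtain ⟨q, hq⟩ := hcne
  have hq' := (hPc q).1 hq
  refine ⟨fun m => {t | ∃ w ∈ P, t = e w m}, u, q, hcov, hvμ, hvν, hμν, hPL u hu, hq'.1,
    fun m => ⟨u, hu, rfl⟩, ?_, ?_, ?_⟩
  · rintro m ⟨w, hw, h⟩
    exact hq'.2 w hw m h
  · intro y hy h1 h2
    by_cases h3 : ∃ w ∈ P, e y v = e w v
    · apply hPA
      have : ∀ m, ∃ w ∈ P, e y m = e w m := by
        intro m
        rcases hcov m with rfl | rfl | rfl
        · exact h3
        · exact h1
        · exact h2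
      choose f hf hff using this
      exact hbox f hf y hy hff
    · refine hmix y hy ⟨pt e v μ y q q, ?_, (pt_v e v μ y q q).symm⟩ h1 h2
      rw [hPc]
      refine ⟨pt_L hy hq'.1 hq'.1, fun w hw m => ?_⟩
      rcases hcov m with rfl | rfl | rfl
      · rw [pt_v]; exact fun h => h3 ⟨w, hw, h⟩
      · rw [pt_μ e hvμ]; exact hq'.2 w hw _
      · rw [pt_ν e hvν hμν]; exact hq'.2 w hw _
  · intro y hy h1 h2 h3
    apply hPcA
    rw [hPc]
    refine ⟨hy, fun w hw m => ?_⟩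
    rcases hcov m with rfl | rfl | rfl
    · exact fun h => h1 ⟨w, hw, h⟩
    · exact fun h => h2 ⟨w, hw, h⟩
    · exact fun h => h3 ⟨w, hw, h⟩

lemma grid_tiling [NeZero M] {e : Crd M p} {A B : Finset (ZMod M)} (C : Ctx e A B) {x0 : ZMod M}
    {Lam : Set (ZMod M)} (hLam : ∀ y, y ∈ Lam ↔ InL e x0 y) :
    IsTiling M Lam (B : Set (ZMod M)) := by
  intro z
  obtain ⟨b, hb, hbz⟩ := C.bS (z - x0)
  refine ⟨(z - b, b), ⟨?_, hb, by ring⟩, ?_⟩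
  · rw [hLam]
    intro m
    rw [bt_sub, hbz, bt_sub]; ring
  · rintro ⟨y, c⟩ ⟨hy, hc, h⟩
    simp only at hy hc h
    rw [hLam] at hy
    have hcb : c = b := by
      refine C.bD c hc b hb fun m => ?_
      rw [hbz, bt_sub, ← h, bt_add, hy m]; ring
    rw [Prod.mk.injEq]
    exact ⟨by rw [← hcb]; linear_combination h, hcb⟩

lemma all_but_p [NeZero M] {e : Crd M p} (hp : ∀ m, (p m).Prime) (hpi : Function.Injective p)
    (hodd : ∀ m, Odd (p m)) (hM : M = ∏ m, p m ^ 2) {A B : Finset (ZMod M)} (hT : Til A B)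
    (hcA : A.card = ∏ m, p m) (hcB : B.card = ∏ m, p m)
    {x0 : ZMod M} {Lam : Set (ZMod M)} (hLam : ∀ y, y ∈ Lam ↔ InL e x0 y)
    (hdiv : ∀ m : ℕ, (∏ m, p m) ∣ m → m ∣ M → m ∈ DivSet M M ((A : Set (ZMod M)) ∩ Lam))
    (hbx : ∃ v μ ν, ∃ (I : ∀ m, Set (ZMod (p m ^ 2))) (u q : ZMod M), Bx e A x0 I u q v μ ν) :
    IsTiling M Lam (B : Set (ZMod M)) ∧ SatisfiesT2 M A ∧ SatisfiesT2 M B := by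
  have hDM : ∏ m, p m ∣ M := by
    rw [hM, Finset.prod_pow]; exact dvd_pow_self _ two_ne_zero
  have bD : ∀ b ∈ B, ∀ b' ∈ B, (∀ m, bt e m b = bt e m b') → b = b' := by
    intro b hb b' hb' h
    have h1 : ∏ m, p m ∣ (b - b').val := by
      rw [dvd_all hp hpi]
      intro m
      rw [← bt_zero e, bt_sub, h m, sub_self]
    obtain ⟨s, hs, s', hs', hg⟩ := hdiv _ (Nat.dvd_gcd h1 hDM) (Nat.gcd_dvd_right _ _)
    have hss := til_sands (e := e) hp hT s hs.1 s' hs'.1 b hb b' hb' (ty_of_gcd e hM hg)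
    rw [hss, sub_self, ZMod.val_zero, Nat.gcd_zero_left] at hg
    have h2 : M ∣ (b - b').val := by
      have := Nat.gcd_dvd_left (b - b').val M
      rwa [← hg] at this
    have h3 := Nat.eq_zero_of_dvd_of_lt h2 (ZMod.val_lt _)
    rw [ZMod.val_eq_zero] at h3
    exact sub_eq_zero.1 h3
  have C := mkCtx e hp hT hcB bD
  obtain ⟨v, μ, ν, I, u, q, D⟩ := hbx
  exact ⟨grid_tiling C hLam, T2_A (e := e) hp hpi hM hcA (fun ψ h1 h2 =>
    core_sum hp hpi hodd hcB bD ψ h1 h2 _ A rfl hT D), T2_B' hp hpi hM C hcB⟩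

end fin

theorem statement14
    (pi pj pk : ℕ) (hpi : pi.Prime) (hpj : pj.Prime) (hpk : pk.Prime)
    (hoi : Odd pi) (hoj : Odd pj) (hok : Odd pk)
    (hij : pi ≠ pj) (hik : pi ≠ pk) (hjk : pj ≠ pk)
    (M : ℕ) (hM : M = pi ^ 2 * pj ^ 2 * pk ^ 2)
    (A B : Finset (ZMod M))
    (htile : IsTiling M (A : Set (ZMod M)) (B : Set (ZMod M)))
    (hcardA : A.card = pi * pj * pk) (hcardB : B.card = pi * pj * pk)
    (hPhiM : cycDvd M M A)
    (x0 : ZMod M) (Lam : Set (ZMod M)) (hLam : Lam = gridSet M x0 (pi * pj * pk))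
    (hdiv : ∀ m : ℕ, (pi * pj * pk) ∣ m → m ∣ M →
      m ∈ DivSet M M ((A : Set (ZMod M)) ∩ Lam))
    (hnfi : ¬ Fibered M pi ((A : Set (ZMod M)) ∩ Lam))
    (hnfj : ¬ Fibered M pj ((A : Set (ZMod M)) ∩ Lam))
    (hnfk : ¬ Fibered M pk ((A : Set (ZMod M)) ∩ Lam))
    (P : Set (ZMod M))
    (hbox : IsBox M (pi ^ 2) (pj ^ 2) (pk ^ 2) Lam P)
    (hPne : P.Nonempty)
    (Pc : Set (ZMod M)) (hPc : Pc = compBox M (pi ^ 2) (pj ^ 2) (pk ^ 2) Lam P)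
    (hPcne : Pc.Nonempty)
    (hPA : P ∪ Pc ⊆ (A : Set (ZMod M)))
    (hmixed :
      mixedBox M (pi ^ 2) (pj ^ 2) (pk ^ 2) Lam P Pc ⊆ (A : Set (ZMod M)) ∨
      mixedBox M (pj ^ 2) (pi ^ 2) (pk ^ 2) Lam P Pc ⊆ (A : Set (ZMod M)) ∨
      mixedBox M (pk ^ 2) (pi ^ 2) (pj ^ 2) Lam P Pc ⊆ (A : Set (ZMod M))) :
    IsTiling M Lam (B : Set (ZMod M)) ∧ SatisfiesT2 M A ∧ SatisfiesT2 M B := by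
  have hM0 : M ≠ 0 := by
    rw [hM]
    have := hpi.pos
    have := hpj.pos
    have := hpk.pos
    positivity
  have : NeZero M := ⟨hM0⟩
  have hp : ∀ m, ((![pi, pj, pk] : Fin 3 → ℕ) m).Prime := by
    intro m; fin_cases m <;> assumption
  have hodd : ∀ m, Odd ((![pi, pj, pk] : Fin 3 → ℕ) m) := by
    intro m; fin_cases m <;> assumption
  have hinj : Function.Injective (![pi, pj, pk] : Fin 3 → ℕ) := by
    intro a b h
    fin_cases a <;> fin_cases b <;> simp_all
  have hD : ∏ m, (![pi, pj, pk] : Fin 3 → ℕ) m = pi * pj * pk := by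
    simp [Fin.prod_univ_three]
  have hM' : M = ∏ m, (![pi, pj, pk] : Fin 3 → ℕ) m ^ 2 := by
    simp [Fin.prod_univ_three, hM]
  have hD' : pi * pj * pk ∣ M := by
    rw [hM]; exact ⟨pi * pj * pk, by ring⟩
  have h0 : pi ^ 2 ∣ M := p_dvd hM' 0
  have h1 : pj ^ 2 ∣ M := p_dvd hM' 1
  have h2 : pk ^ 2 ∣ M := p_dvd hM' 2
  have hT : Til A B := by
    refine ⟨fun z => ?_, ?_⟩
    · obtain ⟨⟨a, b⟩, ⟨ha, hb, h⟩, -⟩ := htile z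
      exact ⟨a, ha, b, hb, h⟩
    · rw [hcardA, hcardB, ZMod.card, hM]; ring
  obtain ⟨e⟩ := exists_crd hp hinj hM'
  have hL : ∀ y, y ∈ Lam ↔ InL e x0 y := by
    intro y
    rw [hLam, gridSet, Set.mem_setOf_eq, dvd_val_iff hD', ← hD, dvd_all hp hinj]
    refine forall_congr' fun m => ?_
    rw [← bt_zero e, bt_sub, sub_eq_zero]
  have E0 : ∀ x y : ZMod M, ((pi ^ 2 : ℕ) : ZMod M) ∣ (x - y) ↔ e x 0 = e y 0 := by
    intro x y
    rw [dvd_val_iff h0, ← sub_eq_zero, ← e_sub, e_zero]; rfl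
  have E1 : ∀ x y : ZMod M, ((pj ^ 2 : ℕ) : ZMod M) ∣ (x - y) ↔ e x 1 = e y 1 := by
    intro x y
    rw [dvd_val_iff h1, ← sub_eq_zero, ← e_sub, e_zero]; rfl
  have E2 : ∀ x y : ZMod M, ((pk ^ 2 : ℕ) : ZMod M) ∣ (x - y) ↔ e x 2 = e y 2 := by
    intro x y
    rw [dvd_val_iff h2, ← sub_eq_zero, ← e_sub, e_zero]; rfl
  refine all_but_p hp hinj hodd hM' hT (hcardA.trans hD.symm) (hcardB.trans hD.symm) hL
    (by rw [hD]; exact hdiv) ?_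
  have hPL : ∀ y ∈ P, InL e x0 y := fun y hy => (hL y).1 (hbox.1 hy)
  have hPA1 : ∀ y ∈ P, y ∈ A := fun y hy => hPA (Or.inl hy)
  have hPA2 : ∀ y ∈ Pc, y ∈ A := fun y hy => hPA (Or.inr hy)
  have hbox' : ∀ f : Fin 3 → ZMod M, (∀ m, f m ∈ P) → ∀ x, InL e x0 x →
      (∀ m, e x m = e (f m) m) → x ∈ P := by
    intro f hf x hx h
    exact hbox.2 (f 0) (hf 0) (f 1) (hf 1) (f 2) (hf 2) x ((hL x).2 hx)
      ((E0 _ _).2 (h 0)) ((E1 _ _).2 (h 1)) ((E2 _ _).2 (h 2))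
  have hPc' : ∀ x, x ∈ Pc ↔ InL e x0 x ∧ ∀ u ∈ P, ∀ m, e x m ≠ e u m := by
    intro x
    rw [hPc, compBox, Set.mem_setOf_eq, hL]
    refine and_congr Iff.rfl (forall_congr' fun u => forall_congr' fun hu => ?_)
    rw [E0, E1, E2]
    constructor
    · rintro ⟨q0, q1, q2⟩ m
      fin_cases m
      · exact q0
      · exact q1
      · exact q2
    · intro h
      exact ⟨h 0, h 1, h 2⟩
  have X := fun (v μ ν : Fin 3) => exists_Bx (v := v) (μ := μ) (ν := ν) hPL hPA1 hbox' hPc' hPA2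
    hPne hPcne
  rcases hmixed with h | h | h
  · refine ⟨0, 1, 2, X 0 1 2 (by decide) (by decide) (by decide) (by decide) ?_⟩
    rintro x hx ⟨u, hu, q0⟩ ⟨w, hw, q1⟩ ⟨t, ht, q2⟩
    exact h ⟨(hL x).2 hx, ⟨u, hu, (E0 _ _).2 q0⟩, ⟨w, hw, (E1 _ _).2 q1⟩, ⟨t, ht, (E2 _ _).2 q2⟩⟩
  · refine ⟨1, 0, 2, X 1 0 2 (by decide) (by decide) (by decide) (by decide) ?_⟩
    rintro x hx ⟨u, hu, q0⟩ ⟨w, hw, q1⟩ ⟨t, ht, q2⟩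
    exact h ⟨(hL x).2 hx, ⟨u, hu, (E1 _ _).2 q0⟩, ⟨w, hw, (E0 _ _).2 q1⟩, ⟨t, ht, (E2 _ _).2 q2⟩⟩
  · refine ⟨2, 0, 1, X 2 0 1 (by decide) (by decide) (by decide) (by decide) ?_⟩
    rintro x hx ⟨u, hu, q0⟩ ⟨w, hw, q1⟩ ⟨t, ht, q2⟩
    exact h ⟨(hL x).2 hx, ⟨u, hu, (E2 _ _).2 q0⟩, ⟨w, hw, (E0 _ _).2 q1⟩, ⟨t, ht, (E1 _ _).2 q2⟩⟩
end
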